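/- arXiv:2109.00856 — 4 statements merged into one kernel-verified Lean document; each statement's English description precedes it below -/
import Mathlib

section
/- Let (A,D) be a MASA inclusion of C*-algebras and let J be a norm-closed two-sided ideal of A with J ∩ D = {0}. Then (D + J, D) is a singular inclusion; that is, N(D + J, D) = D. -/
/-!
Write a normalizer as `n = d + j` with `d ∈ D` and `j ∈ J`. Closed ideals of a C⋆-algebra are
self-adjoint (`star_mem_of_isClosed_ideal`), so for `e ∈ D` the element `n e n* - d e d*` lies in
`J`; it also lies in `D`, hence it vanishes. Thus `n e n* = d e d*` and likewise
`n* e n = d* e d` for every `e ∈ D`: conjugation by `n` and by `d` agree on `D`.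

This forces `n` to commute with `D` (`commute_of_conj_eq`): the identities give
`((ne)*(ne))² = ((de)*(de))²`, so `(ne)*(ne) = (de)*(de)` by uniqueness of positive square roots,
and then expanding shows `(ne - en)*(ne - en) = (de - ed)*(de - ed) = 0`. Since `D` is a MASA,
`n ∈ D`.
-/


open scoped ComplexOrder
open Filter Topology

namespace CartanPaper

variable {A : Type*} [NonUnitalCStarAlgebra A]

/-- A state on a C*-algebra: a positive linear functional of norm one. -/
def IsState (ρ : A →L[ℂ] ℂ) : Prop :=
  ‖ρ‖ = 1 ∧ ∀ a : A, 0 ≤ ρ (star a * a)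

/-- `n` is a normalizer for the inclusion `(A, D)`:  `n D n* ∪ n* D n ⊆ D`. -/
def IsNormalizer (D : NonUnitalStarSubalgebra ℂ A) (n : A) : Prop :=
  ∀ d ∈ D, n * d * star n ∈ D ∧ star n * d * n ∈ D

/-- The inclusion `(A, D)` is regular: the linear span of the normalizers is norm-dense in `A`. -/
def IsRegularInclusion (D : NonUnitalStarSubalgebra ℂ A) : Prop :=
  Dense (↑(Submodule.span ℂ {n : A | IsNormalizer D n}) : Set A)

/-- `D` is a maximal abelian *-subalgebra (MASA) of `A`:  the set of elements of `A` commuting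
with `D` is exactly `D`.  (This encodes simultaneously that `D` is abelian and that it is
maximal among abelian *-subalgebras.) -/
def IsMasa (D : NonUnitalStarSubalgebra ℂ A) : Prop :=
  {a : A | ∀ d ∈ D, a * d = d * a} = (D : Set A)

end CartanPaper

open CartanPaper

/-- A closed two-sided ideal of a C⋆-algebra is self-adjoint. With `b = j* j` and
`f δ t = t² / (δ² + t²)`, the elements `f δ (b) j*` lie in the ideal and tend to `j*` as `δ → 0`. -/
lemma star_mem_of_isClosed_ideal {A : Type*} [NonUnitalCStarAlgebra A]
    (J : Set A) (hJclosed : IsClosed J)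
    (hJideal : ∀ a : A, ∀ j ∈ J, a * j ∈ J ∧ j * a ∈ J) {j : A} (hj : j ∈ J) :
    star j ∈ J := by
  rw [← hJclosed.closure_eq, Metric.mem_closure_iff]
  intro ε hε
  obtain ⟨δ, hδ, hδε⟩ : ∃ δ : ℝ, 0 < δ ∧ δ < ε ^ 2 := exists_between (by positivity)
  have hden : ∀ t : ℝ, δ ^ 2 + t ^ 2 ≠ 0 := fun t => by positivity
  let b : A := star j * j
  have hb : IsSelfAdjoint b := IsSelfAdjoint.star_mul_self j
  -- `f δ` is factored as `t * g t` with `g 0 = 0`, so that `f δ (b) = b * g b` visibly lies in `J`.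
  let g : ℝ → ℝ := fun t => t / (δ ^ 2 + t ^ 2)
  let f : ℝ → ℝ := fun t => t * g t
  have hg : Continuous g := by
    apply Continuous.div (by fun_prop) (by fun_prop) hden
  have hf : Continuous f := by fun_prop
  have hg0 : g 0 = 0 := by simp [g]
  have hf0 : f 0 = 0 := by simp [f]
  let F : A := cfcₙ f b
  have hFsa : star F = F := (cfcₙ_predicate (R := ℝ) f b : IsSelfAdjoint _).star_eq
  have hF : F = b * cfcₙ g b := by
    change cfcₙ (fun t => t * g t) b = _
    rw [cfcₙ_mul (fun t : ℝ => t) g b, cfcₙ_id' ℝ b]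
  have hbJ : b ∈ J := (hJideal _ _ hj).1
  refine ⟨F * star j, (hJideal _ _ (hF ▸ (hJideal _ _ hbJ).2)).2, ?_⟩
  have hexp : star (j - j * F) * (j - j * F) =
      cfcₙ (fun t => (t - t * f t) - (f t * t - f t * t * f t)) b := by
    rw [cfcₙ_sub (fun t : ℝ => t - t * f t) (fun t => f t * t - f t * t * f t) b,
      cfcₙ_sub (fun t : ℝ => t) (fun t => t * f t) b,
      cfcₙ_sub (fun t : ℝ => f t * t) (fun t => f t * t * f t) b,
      cfcₙ_mul (fun t : ℝ => f t * t) f b,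
      cfcₙ_mul (fun t : ℝ => t) f b, cfcₙ_mul f (fun t : ℝ => t) b, cfcₙ_id' ℝ b]
    change _ = (b - b * F) - (F * b - F * b * F)
    simp only [star_sub, star_mul, hFsa, sub_mul, mul_sub, b, mul_assoc]
    abel
  have hnorm : ‖star (j - j * F) * (j - j * F)‖ ≤ δ := by
    rw [hexp]
    refine norm_cfcₙ_le fun t _ => ?_
    have h1 : (t - t * f t) - (f t * t - f t * t * f t) =
        t * δ ^ 4 / (δ ^ 2 + t ^ 2) ^ 2 := by
      simp only [f, g]
      field_simp [hden t]
      ring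
    rw [h1, norm_div, norm_mul, Real.norm_eq_abs, Real.norm_eq_abs, Real.norm_eq_abs,
      abs_of_pos (by positivity : 0 < δ ^ 4),
      abs_of_pos (by positivity : 0 < (δ ^ 2 + t ^ 2) ^ 2), div_le_iff₀ (by positivity)]
    have h2 : |t| * δ ≤ δ ^ 2 + t ^ 2 := by
      nlinarith [sq_nonneg (|t| - δ), sq_abs t, sq_nonneg t, sq_nonneg δ]
    have h3 : δ ^ 2 ≤ δ ^ 2 + t ^ 2 := by nlinarith [sq_nonneg t]
    calc |t| * δ ^ 4 = δ * ((|t| * δ) * δ ^ 2) := by ring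
      _ ≤ δ * ((δ ^ 2 + t ^ 2) * (δ ^ 2 + t ^ 2)) := by gcongr
      _ = δ * (δ ^ 2 + t ^ 2) ^ 2 := by ring
  rw [CStarRing.norm_star_mul_self] at hnorm
  have hd : dist (star j) (F * star j) = ‖j - j * F‖ := by
    rw [dist_eq_norm, ← norm_star (j - j * F), star_sub, star_mul, hFsa]
  rw [hd]
  nlinarith [norm_nonneg (j - j * F)]

/-- If conjugation by `n` and by `d ∈ D` agree on a commutative `D`, then `n` commutes with `D`. -/
lemma commute_of_conj_eq {A : Type*} [NonUnitalCStarAlgebra A]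
    (D : NonUnitalStarSubalgebra ℂ A) (hcomm : ∀ x ∈ D, ∀ y ∈ D, x * y = y * x)
    {n d : A} (hd : d ∈ D)
    (h1 : ∀ e ∈ D, n * e * star n = d * e * star d)
    (h2 : ∀ e ∈ D, star n * e * n = star d * e * d) {e : A} (he : e ∈ D) :
    n * e = e * n := by
  let _ := CStarAlgebra.spectralOrder A
  let _ := CStarAlgebra.spectralOrderedRing A
  have hes : star e ∈ D := star_mem he
  have hsq : star (n * e) * (n * e) * (star (n * e) * (n * e)) =
      star (d * e) * (d * e) * (star (d * e) * (d * e)) := by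
    have hee : e * star e ∈ D := mul_mem he hes
    calc star (n * e) * (n * e) * (star (n * e) * (n * e))
        = star e * (star n * (n * (e * star e) * star n) * n) * e := by
          simp only [star_mul, mul_assoc]
      _ = star e * (star d * (d * (e * star e) * star d) * d) * e := by
          rw [h1 _ hee, h2 _ (mul_mem (mul_mem hd hee) (star_mem hd))]
      _ = _ := by simp only [star_mul, mul_assoc]
  have hroot : star (n * e) * (n * e) = star (d * e) * (d * e) :=
    (CFC.mul_self_eq_mul_self_iff _ _ (star_mul_self_nonneg _) (star_mul_self_nonneg _)).1 hsq
  have key : ∀ m : A, star (m * e - e * m) * (m * e - e * m) =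
      star (m * e) * (m * e) - star e * (star m * e * m) - (star m * star e * m) * e
        + star m * (star e * e) * m := by
    intro m
    simp only [star_sub, star_mul, sub_mul, mul_sub, mul_assoc]
    abel
  have hzero : star (n * e - e * n) * (n * e - e * n) = 0 := by
    rw [key, hroot, h2 _ he, h2 _ hes, h2 _ (mul_mem hes he), ← key, hcomm d hd e he]
    simp
  exact sub_eq_zero.1 ((CStarRing.star_mul_self_eq_zero_iff _).1 hzero)

/-- Let `(A, D)` be a MASA inclusion of C*-algebras and let `J` be a
norm-closed two-sided ideal of `A` with `J ∩ D = {0}`.  Then `(D + J, D)` is a singular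
inclusion; that is, `N(D + J, D) = D`. -/
theorem stmt_14 {A : Type*} [NonUnitalCStarAlgebra A]
    (D : NonUnitalStarSubalgebra ℂ A) (hDclosed : IsClosed (D : Set A))
    (hmasa : IsMasa D)
    (J : Set A) (hJclosed : IsClosed J) (hJzero : (0 : A) ∈ J)
    (hJadd : ∀ x ∈ J, ∀ y ∈ J, x + y ∈ J)
    (hJsmul : ∀ c : ℂ, ∀ x ∈ J, c • x ∈ J)
    (hJideal : ∀ a : A, ∀ j ∈ J, a * j ∈ J ∧ j * a ∈ J)
    (hJDtrivial : ∀ x ∈ J, x ∈ D → x = 0) :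
    {n : A | (∃ d ∈ D, ∃ j ∈ J, n = d + j) ∧
        ∀ d ∈ D, n * d * star n ∈ D ∧ star n * d * n ∈ D} = (D : Set A) := by
  have hD : ∀ a : A, a ∈ D ↔ ∀ d ∈ D, a * d = d * a := fun a =>
    (Set.ext_iff.1 hmasa a).symm
  have hcomm : ∀ x ∈ D, ∀ y ∈ D, x * y = y * x := fun x hx => (hD x).1 hx
  have hstar : ∀ j ∈ J, star j ∈ J := fun j hj =>
    star_mem_of_isClosed_ideal J hJclosed hJideal hj
  ext n
  constructor
  · rintro ⟨⟨d, hd, j, hj, rfl⟩, hn⟩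
    refine (hD _).2 fun e he => commute_of_conj_eq D hcomm hd ?_ ?_ he
    · intro e he
      refine sub_eq_zero.1 (hJDtrivial _ ?_
        (sub_mem (hn e he).1 (mul_mem (mul_mem hd he) (star_mem hd))))
      have : (d + j) * e * star (d + j) - d * e * star d =
          d * e * star j + j * (e * star (d + j)) := by
        simp only [star_add, add_mul, mul_add, mul_assoc]
        abel
      rw [this]
      exact hJadd _ (hJideal _ _ (hstar j hj)).1 _ (hJideal _ _ hj).2
    · intro e he
      refine sub_eq_zero.1 (hJDtrivial _ ?_
        (sub_mem (hn e he).2 (mul_mem (mul_mem (star_mem hd) he) hd)))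
      have : star (d + j) * e * (d + j) - star d * e * d =
          star d * e * j + star j * (e * (d + j)) := by
        simp only [star_add, add_mul, mul_add, mul_assoc]
        abel
      rw [this]
      exact hJadd _ (hJideal _ _ hj).1 _ (hJideal _ _ (hstar j hj)).2
  · intro hn
    exact ⟨⟨n, hn, 0, hJzero, (add_zero n).symm⟩, fun d hd =>
      ⟨mul_mem (mul_mem hn hd) (star_mem hn), mul_mem (mul_mem (star_mem hn) hd) hn⟩⟩
end

section
/- Let (A,D) be a regular inclusion of C*-algebras with A non-unital. Then (A,D) is a Cartan inclusion if and only if its unitization (Ã, D̃) is a Cartan inclusion. -/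
/-!
The MASA condition passes between `(A, D)` and `(Ã, D̃)` because scalars are central
(`isMasa_Dtilde_iff`). The rest depends on the fact that, for a regular MASA inclusion, every
approximate unit of `D` is an approximate unit of `A`.

To see this, let `n` be a normalizer of `D`. Then `n n*` commutes with `D`
(`IsNormalizer.commute`), hence belongs to the MASA `D`, and the C*-identity gives `e n → n` along
an approximate unit of `D`; normalizers span a dense subspace, so `e a → a` for all `a ∈ A`
(`ApproxUnitIn.tendsto_all`). Membership `n n*, n* n ∈ D` also shows that `n` normalizes `D̃`, so
`(Ã, D̃)` is regular.

Given a faithful expectation `P : A → D`, the map `λ + a ↦ λ + P a` is a faithful projection onto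
`D̃`; it is contractive by compressing with the approximate unit (`norm_extendP_le`). Conversely,
given `Q : Ã → D̃`, the scalar part of `Q` is a contractive unital functional vanishing on `D`,
hence on `A` (`functional_eq_zero`), so `Q` restricts to a faithful expectation `A → D`.
-/

open scoped ComplexOrder
open Filter Topology

open CartanPaper

namespace CartanPaper

variable {A : Type*} [NonUnitalCStarAlgebra A]

/-- `P` is a conditional expectation of `A` onto `D`:  a contractive linear projection of `A`
onto `D`. -/
def IsCondExpectation (D : NonUnitalStarSubalgebra ℂ A) (P : A →L[ℂ] A) : Prop :=
  (∀ a : A, P a ∈ D) ∧ (∀ d ∈ D, P d = d) ∧ ‖P‖ ≤ 1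

/-- A map `P : A → A` is faithful if `P (a* a) = 0` implies `a = 0`. -/
def IsFaithful (P : A →L[ℂ] A) : Prop := ∀ a : A, P (star a * a) = 0 → a = 0

/-- A Cartan inclusion:  a regular MASA inclusion admitting a faithful conditional
expectation onto `D`. -/
def IsCartanInclusion (D : NonUnitalStarSubalgebra ℂ A) : Prop :=
  IsRegularInclusion D ∧ IsMasa D ∧
    ∃ P : A →L[ℂ] A, IsCondExpectation D P ∧ IsFaithful P

/-- A free normalizer: a normalizer whose square is zero. -/
def IsFreeNormalizer (D : NonUnitalStarSubalgebra ℂ A) (n : A) : Prop :=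
  IsNormalizer D n ∧ n * n = 0

/-- Kumjian's conditions for an inclusion `(A, D)`:  (I) there is a faithful conditional
expectation `P : A → D`, and (II) the linear span of the free normalizers is norm-dense in
`ker P`. -/
def KumjianConditions (D : NonUnitalStarSubalgebra ℂ A) : Prop :=
  ∃ P : A →L[ℂ] A, IsCondExpectation D P ∧ IsFaithful P ∧
    closure (↑(Submodule.span ℂ {n : A | IsFreeNormalizer D n}) : Set A) = {a : A | P a = 0}

/-- A pure state: an extreme point of the state space. -/
def IsPureState (ρ : A →L[ℂ] ℂ) : Prop :=
  ρ ∈ Set.extremePoints ℝ {φ : A →L[ℂ] ℂ | IsState φ}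

/-- Every pure state of `D` extends to a state of `A`, and any such extension is unique. -/
def UniquePureStateExtension (D : NonUnitalStarSubalgebra ℂ A) [IsClosed (D : Set A)] :
    Prop :=
  ∀ σ : D →L[ℂ] ℂ, IsPureState σ →
    (∃ ρ : A →L[ℂ] ℂ, IsState ρ ∧ ∀ x : D, ρ x = σ x) ∧
      ∀ ρ₁ ρ₂ : A →L[ℂ] ℂ, IsState ρ₁ → IsState ρ₂ →
        (∀ x : D, ρ₁ x = σ x) → (∀ x : D, ρ₂ x = σ x) → ρ₁ = ρ₂

end CartanPaper

namespace CartanPaper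

variable {A : Type*} [NonUnitalCStarAlgebra A]

/-- The unitization `D̃ = D + ℂ 1` of `D` inside the unitization `Ã = A ⊕ ℂ 1` of `A`. -/
def Dtilde (D : NonUnitalStarSubalgebra ℂ A) :
    NonUnitalStarSubalgebra ℂ (Unitization ℂ A) where
  carrier := {x | x.snd ∈ D}
  add_mem' {a b} ha hb := by
    simp only [Set.mem_setOf_eq, Unitization.snd_add] at *
    exact add_mem ha hb
  zero_mem' := by
    simp only [Set.mem_setOf_eq, Unitization.snd_zero]
    exact zero_mem D
  mul_mem' {a b} ha hb := by
    simp only [Set.mem_setOf_eq, Unitization.snd_mul] at *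
    exact add_mem (add_mem (SMulMemClass.smul_mem _ hb) (SMulMemClass.smul_mem _ ha))
      (mul_mem ha hb)
  smul_mem' c a ha := by
    simp only [Set.mem_setOf_eq, Unitization.snd_smul] at *
    exact SMulMemClass.smul_mem c ha
  star_mem' {a} ha := by
    simp only [Set.mem_setOf_eq, Unitization.snd_star] at *
    exact star_mem ha

/-- `D̃` is closed in `Ã` whenever `D` is closed in `A`. -/
instance DtildeClosed (D : NonUnitalStarSubalgebra ℂ A) [hD : IsClosed (D : Set A)] :
    IsClosed ((Dtilde D : Set (Unitization ℂ A))) := by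
  have hcont : Continuous (fun x : Unitization ℂ A => x.snd) :=
    continuous_snd.comp (Unitization.uniformEquivProd (𝕜 := ℂ) (A := A)).continuous
  exact hD.preimage hcont

end CartanPaper

namespace CartanPaper

variable {A : Type*} [NonUnitalCStarAlgebra A]

/-! ### Approximate units of `D` -/

/-- `l` is a contractive selfadjoint approximate unit of `D`, viewed as a filter on `A`. Instead of
positivity of `e`, only its consequence `‖1 - e‖ ≤ 1` in the unitization is required. Convergence
is stated for left multiplication by `e`, since the right-hand version follows by taking adjoints. -/
structure ApproxUnitIn (D : NonUnitalStarSubalgebra ℂ A) (l : Filter A) : Prop where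
  neBot : l.NeBot
  mem : ∀ᶠ e in l, e ∈ D
  star_eq : ∀ᶠ e in l, star e = e
  norm_le : ∀ᶠ e in l, ‖e‖ ≤ 1
  norm_one_sub_le : ∀ᶠ e : A in l, ‖(1 : Unitization ℂ A) - (e : Unitization ℂ A)‖ ≤ 1
  tendsto : ∀ d ∈ D, Tendsto (fun e => e * d) l (𝓝 d)

theorem exists_approxUnitIn (D : NonUnitalStarSubalgebra ℂ A) (hD : IsClosed (D : Set A)) :
    ∃ l : Filter A, ApproxUnitIn D l := by
  have : IsClosed (D : Set A) := hD
  let : PartialOrder D := CStarAlgebra.spectralOrder D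
  have : StarOrderedRing D := CStarAlgebra.spectralOrderedRing D
  have hl := CStarAlgebra.increasingApproximateUnit D
  -- The order on `A` is introduced only further down, since it would put a competing order on `D`.
  have hsq : ∀ᶠ e : D in CStarAlgebra.approximateUnit D, ∃ b : A, (e : A) = star b * b := by
    filter_upwards [hl.eventually_nonneg] with e he
    obtain ⟨b, rfl⟩ := CStarAlgebra.nonneg_iff_eq_star_mul_self.mp he
    exact ⟨b, rfl⟩
  refine ⟨(CStarAlgebra.approximateUnit D).map Subtype.val, ?_, ?_, ?_, ?_, ?_, ?_⟩
  · have := hl.neBot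
    exact Filter.map_neBot
  · exact Filter.eventually_map.mpr (Eventually.of_forall fun e => e.2)
  · refine Filter.eventually_map.mpr (hl.eventually_star_eq.mono fun e he => ?_)
    exact congrArg Subtype.val he
  · exact Filter.eventually_map.mpr hl.eventually_norm
  · refine Filter.eventually_map.mpr ?_
    filter_upwards [hsq, hl.eventually_norm] with e ⟨b, hb⟩ h1
    let : PartialOrder A := CStarAlgebra.spectralOrder A
    have : StarOrderedRing A := CStarAlgebra.spectralOrderedRing A
    have hnn : 0 ≤ (e : A) := hb ▸ star_mul_self_nonneg b
    have := CStarAlgebra.inr_mem_Icc_iff_norm_le.mpr ⟨hnn, h1⟩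
    exact (CStarAlgebra.mem_Icc_iff_norm_le_one.mp
      (Set.sub_mem_Icc_zero_iff_right.mpr this)).2
  · intro d hd
    refine Filter.tendsto_map'_iff.mpr ?_
    exact (continuous_subtype_val.tendsto _).comp (hl.tendsto_mul_right ⟨d, hd⟩)

variable {D : NonUnitalStarSubalgebra ℂ A} {l : Filter A}

/-- `e b → b` as soon as `b b* ∈ D`, by the C*-identity applied to `b - e b`. -/
theorem ApproxUnitIn.tendsto_of_mul_star_mem (hl : ApproxUnitIn D l) {b : A}
    (hb : b * star b ∈ D) : Tendsto (fun e => e * b) l (𝓝 b) := by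
  set z := b * star b with hz
  have h0 : Tendsto (fun e => 2 * ‖z - e * z‖) l (𝓝 0) := by
    have := ((tendsto_const_nhds (x := z)).sub (hl.tendsto z hb)).norm.const_mul 2
    simpa using this
  have h1 : Tendsto (fun e => ‖e * b - b‖ * ‖e * b - b‖) l (𝓝 0) := by
    refine tendsto_of_tendsto_of_tendsto_of_le_of_le' tendsto_const_nhds h0
      (Eventually.of_forall fun e => by positivity) ?_
    filter_upwards [hl.star_eq, hl.norm_le] with e hs hn
    rw [← CStarRing.norm_self_mul_star]
    have : (e * b - b) * star (e * b - b) = (z - e * z) - (z - e * z) * e := by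
      simp only [star_sub, star_mul, hs, hz]
      noncomm_ring
    rw [this]
    calc _ ≤ ‖z - e * z‖ + ‖z - e * z‖ * ‖e‖ :=
          (norm_sub_le _ _).trans (by gcongr; exact norm_mul_le _ _)
      _ ≤ ‖z - e * z‖ + ‖z - e * z‖ * 1 := by gcongr
      _ = _ := by ring
  rw [tendsto_iff_norm_sub_tendsto_zero]
  have := h1.sqrt
  simpa [Real.sqrt_mul_self] using this

/-- The moving-target version of `e b → b`: the limit persists when `b` is replaced by a family
converging to it, since the `e` are contractions. -/
theorem ApproxUnitIn.tendsto_mul (hl : ApproxUnitIn D l) {u : A → A} {b : A}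
    (hb : Tendsto (fun e => e * b) l (𝓝 b)) (hu : Tendsto u l (𝓝 b)) :
    Tendsto (fun e => e * u e) l (𝓝 b) := by
  have h0 : Tendsto (fun e => e * (u e - b)) l (𝓝 0) := by
    refine squeeze_zero_norm' ?_ (tendsto_iff_norm_sub_tendsto_zero.mp hu)
    filter_upwards [hl.norm_le] with e he
    exact (norm_mul_le _ _).trans (mul_le_of_le_one_left (norm_nonneg _) he)
  have := h0.add hb
  simpa [mul_sub] using this

/-! ### Normalizers of a MASA -/

/-- The positive element `e n n* e` commutes with everything its square commutes with. -/
theorem commute_of_mul_self (n e d : A) (he : star e = e)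
    (h : Commute ((e * (n * star n) * e) * (e * (n * star n) * e)) d) :
    Commute (e * (n * star n) * e) d := by
  let : PartialOrder A := CStarAlgebra.spectralOrder A
  have : StarOrderedRing A := CStarAlgebra.spectralOrderedRing A
  have hp : 0 ≤ e * (n * star n) * e := by
    have := mul_star_self_nonneg (e * n)
    simpa [he, mul_assoc] using this
  rw [← CFC.sqrt_mul_self _ hp]
  exact h.cfcₙ_nnreal _

/-- If `n` normalizes the abelian algebra `D` then `n n*` commutes with `D`. With `x = n n*`, each
selfadjoint `e ∈ D` gives `(e x e)² = e (x e² x) e ∈ D`, so the positive element `e x e` commutes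
with `D`; letting `e` run through an approximate unit of `D` yields the claim for `x`. -/
theorem IsNormalizer.commute (hD : IsClosed (D : Set A))
    (hab : ∀ x ∈ D, ∀ y ∈ D, x * y = y * x) {n : A} (hn : IsNormalizer D n) {d : A}
    (hd : d ∈ D) : n * star n * d = d * (n * star n) := by
  obtain ⟨l, hl⟩ := exists_approxUnitIn D hD
  have := hl.neBot
  set x := n * star n with hx
  have hxs : star x = x := by simp [hx]
  have hxD : ∀ c ∈ D, x * c * x ∈ D := fun c hc => by
    have := (hn _ (hn c hc).2).1
    simpa [hx, mul_assoc] using this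
  have hcomm : ∀ e ∈ D, star e = e → ∀ c ∈ D, (e * x * e) * c = c * (e * x * e) := by
    intro e he hs c hc
    refine commute_of_mul_self n e c hs ?_
    have hm : (e * x * e) * (e * x * e) ∈ D := by
      have := mul_mem (mul_mem he (hxD _ (mul_mem he he))) he
      simpa [mul_assoc] using this
    exact hab _ hm _ hc
  have hlim : ∀ c ∈ D, Tendsto (fun e => e * x * e * c) l (𝓝 (x * c)) := by
    intro c hc
    have h1 : Tendsto (fun e => e * (x * c)) l (𝓝 (x * c)) := by
      refine hl.tendsto_of_mul_star_mem ?_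
      have := hxD _ (mul_mem hc (star_mem hc))
      simpa [hxs, mul_assoc] using this
    have h2 := hl.tendsto_mul h1 ((hl.tendsto c hc).const_mul x)
    simpa [mul_assoc] using h2
  have hlim' : Tendsto (fun e => d * (e * x * e)) l (𝓝 (d * x)) := by
    have := (continuous_star.tendsto _).comp (hlim (star d) (star_mem hd))
    simp only [star_mul, star_star, hxs] at this
    refine this.congr' ?_
    filter_upwards [hl.star_eq] with e he
    simp [he, hxs, mul_assoc]
  refine tendsto_nhds_unique (hlim d hd) (hlim'.congr' ?_)
  filter_upwards [hl.mem, hl.star_eq] with e he hs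
  exact (hcomm e he hs d hd).symm

theorem IsMasa.abelian (hM : IsMasa D) : ∀ x ∈ D, ∀ y ∈ D, x * y = y * x := by
  intro x hx
  have : x ∈ {a : A | ∀ d ∈ D, a * d = d * a} := by rw [hM]; exact hx
  exact this

theorem IsNormalizer.star {n : A} (hn : IsNormalizer D n) : IsNormalizer D (star n) :=
  fun d hd => by simpa using (hn d hd).symm

/-- For a MASA, `n n*` lies in `D` for each normalizer `n`, although `D` need not contain a unit
for `A`. -/
theorem IsNormalizer.mul_star_mem (hD : IsClosed (D : Set A)) (hM : IsMasa D) {n : A}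
    (hn : IsNormalizer D n) : n * Star.star n ∈ D := by
  have : n * Star.star n ∈ {a : A | ∀ d ∈ D, a * d = d * a} :=
    fun d hd => hn.commute hD hM.abelian hd
  rw [hM] at this
  exact this

/-- For a regular MASA inclusion, an approximate unit of `D` is one of `A`. -/
theorem ApproxUnitIn.tendsto_all (hl : ApproxUnitIn D l) (hD : IsClosed (D : Set A))
    (hM : IsMasa D) (hreg : IsRegularInclusion D) (a : A) :
    Tendsto (fun e => e * a) l (𝓝 a) := by
  have hspan : ∀ b ∈ Submodule.span ℂ {n : A | IsNormalizer D n},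
      Tendsto (fun e => e * b) l (𝓝 b) := by
    intro b hb
    induction hb using Submodule.span_induction with
    | mem n hn => exact hl.tendsto_of_mul_star_mem (hn.mul_star_mem hD hM)
    | zero => simpa using tendsto_const_nhds
    | add x y _ _ hx hy => simpa [mul_add] using hx.add hy
    | smul c x _ hx => simpa [mul_smul_comm] using hx.const_smul c
  rw [Metric.tendsto_nhds]
  intro ε hε
  obtain ⟨b, hb, hab⟩ := Metric.dense_iff.mp hreg a (ε / 3) (by positivity)
  rw [Metric.mem_ball, dist_eq_norm] at hb
  filter_upwards [Metric.tendsto_nhds.mp (hspan b hab) (ε / 3) (by positivity), hl.norm_le]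
    with e he hn
  rw [dist_eq_norm] at he ⊢
  have h1 : e * a - a = (e * b - b) - e * (b - a) + (b - a) := by noncomm_ring
  have h2 : ‖e * (b - a)‖ ≤ ‖b - a‖ :=
    (norm_mul_le _ _).trans (mul_le_of_le_one_left (norm_nonneg _) hn)
  rw [h1]
  calc _ ≤ ‖e * b - b‖ + ‖e * (b - a)‖ + ‖b - a‖ :=
        (norm_add_le _ _).trans (by gcongr; exact norm_sub_le _ _)
    _ < ε := by linarith

theorem ApproxUnitIn.tendsto_all_right (hl : ApproxUnitIn D l)
    (h : ∀ a : A, Tendsto (fun e => e * a) l (𝓝 a)) (a : A) :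
    Tendsto (fun e => a * e) l (𝓝 a) := by
  have := (continuous_star.tendsto _).comp (h (star a))
  rw [star_star] at this
  refine this.congr' ?_
  filter_upwards [hl.star_eq] with e he
  simp [he]

/-! ### The MASA condition and regularity of the unitization -/

theorem mem_Dtilde {x : Unitization ℂ A} : x ∈ Dtilde D ↔ x.snd ∈ D := Iff.rfl

/-- The commutant of `D̃` consists of the `x` whose `A`-component commutes with `D`. -/
theorem isMasa_Dtilde_iff : IsMasa (Dtilde D) ↔ IsMasa D := by
  have key : ∀ x : Unitization ℂ A, (∀ y ∈ Dtilde D, x * y = y * x) ↔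
      ∀ d ∈ D, x.snd * d = d * x.snd := by
    intro x
    constructor
    · intro h d hd
      have := congrArg (fun x => x.snd) (h (d : Unitization ℂ A) (by simpa [mem_Dtilde] using hd))
      simpa using this
    · intro h y hy
      ext
      · simp [mul_comm]
      · simp only [Unitization.snd_mul, h _ hy]
        abel
  constructor
  · intro h
    ext a
    have := Set.ext_iff.mp h (a : Unitization ℂ A)
    rw [Set.mem_ofPred_eq, key] at this
    simpa [mem_Dtilde] using this
  · intro h
    ext x
    rw [Set.mem_ofPred_eq, key]
    exact Set.ext_iff.mp h x.snd

/-- A normalizer `n` of `D` also normalizes `D̃`, because `n n*` and `n* n` lie in `D`. -/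
theorem IsRegularInclusion.unitization (hD : IsClosed (D : Set A)) (hM : IsMasa D)
    (hreg : IsRegularInclusion D) : IsRegularInclusion (Dtilde D) := by
  have hone : IsNormalizer (Dtilde D) (1 : Unitization ℂ A) := fun d hd => by simpa using hd
  have hinr : ∀ n : A, IsNormalizer D n → IsNormalizer (Dtilde D) (n : Unitization ℂ A) := by
    intro n hn d hd
    have h1 := hn.mul_star_mem hD hM
    have h2 := hn.star.mul_star_mem hD hM
    rw [star_star] at h2
    constructor
    · have := add_mem (SMulMemClass.smul_mem d.fst h1) (hn _ hd).1
      simpa [mem_Dtilde, add_mul, smul_mul_assoc] using this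
    · have := add_mem (SMulMemClass.smul_mem d.fst h2) (hn _ hd).2
      simpa [mem_Dtilde, add_mul, smul_mul_assoc] using this
  set S := Submodule.span ℂ {n : Unitization ℂ A | IsNormalizer (Dtilde D) n} with hS
  have hmem : ∀ b ∈ Submodule.span ℂ {n : A | IsNormalizer D n}, (b : Unitization ℂ A) ∈ S := by
    intro b hb
    induction hb using Submodule.span_induction with
    | mem n hn => exact Submodule.subset_span (hinr n hn)
    | zero => simp
    | add x y _ _ hx hy => simpa using add_mem hx hy
    | smul c x _ hx => simpa using S.smul_mem c hx
  intro x
  have hcont : Continuous fun a : A => Unitization.inl x.fst + (a : Unitization ℂ A) := by fun_prop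
  have := map_mem_closure hcont (hreg x.snd) (t := (S : Set (Unitization ℂ A))) (by
    intro b hb
    refine add_mem ?_ (hmem b hb)
    have := S.smul_mem x.fst (Submodule.subset_span hone)
    simpa [Algebra.smul_def, Unitization.algebraMap_eq_inl] using this)
  rwa [Unitization.inl_fst_add_inr_snd_eq] at this

/-! ### Extending the expectation to the unitization -/

/-- The unital extension `λ + a ↦ λ + P a` of `P` to the unitization. -/
noncomputable def extendP (P : A →L[ℂ] A) : Unitization ℂ A →ₗ[ℂ] Unitization ℂ A where
  toFun x := Unitization.inl x.fst + (P x.snd : Unitization ℂ A)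
  map_add' x y := by ext <;> simp
  map_smul' c x := by ext <;> simp

/-- The unital extension is contractive. For `x = λ + a` the compression `e x e` lies in `A`, so
`‖P (e x e)‖ ≤ ‖x‖`; moreover `P (e x e) = λ e² + P (e a e)`, and multiplied by any `c` this
converges to `(λ + P a) c`. The norm of `λ + P a` is the maximum of `|λ|` and its norm as a left
multiplier. No bimodule property of `P` is needed. -/
theorem norm_extendP_le (hl : ApproxUnitIn D l)
    (h : ∀ a : A, Tendsto (fun e => e * a) l (𝓝 a)) {P : A →L[ℂ] A}
    (hP : IsCondExpectation D P) (x : Unitization ℂ A) : ‖extendP P x‖ ≤ ‖x‖ := by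
  have := hl.neBot
  obtain ⟨-, hPd, hPn⟩ := hP
  have hfst : ‖x.fst‖ ≤ ‖x‖ := by rw [Unitization.norm_eq_sup]; exact le_sup_left
  rw [Unitization.norm_eq_sup]
  refine sup_le (by simpa [extendP] using hfst) ?_
  refine ContinuousLinearMap.opNorm_le_bound _ (norm_nonneg _) fun c => ?_
  have hr := hl.tendsto_all_right h
  have hlim : Tendsto (fun e => (P (x.fst • (e * e) + e * (x.snd * e))) * c) l
      (𝓝 (x.fst • c + P x.snd * c)) := by
    have h1 : Tendsto (fun e => e * (x.snd * e)) l (𝓝 x.snd) := hl.tendsto_mul (h _) (hr _)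
    have h2 := ((P.continuous.tendsto _).comp h1).mul_const c
    have h3 : Tendsto (fun e => e * (e * c)) l (𝓝 c) := hl.tendsto_mul (h c) (h c)
    refine ((h3.const_smul x.fst).add h2).congr' ?_
    filter_upwards [hl.mem] with e he
    rw [map_add, map_smul, hPd _ (mul_mem he he), add_mul, smul_mul_assoc, mul_assoc]
    rfl
  have hgoal : ‖x.fst • c + P x.snd * c‖ ≤ ‖x‖ * ‖c‖ := by
    refine le_of_tendsto hlim.norm ?_
    filter_upwards [hl.norm_le] with e he
    have h4 : ‖x.fst • (e * e) + e * (x.snd * e)‖ ≤ ‖x‖ := by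
      have h5 : ((x.fst • (e * e) + e * (x.snd * e) : A) : Unitization ℂ A)
          = (e : Unitization ℂ A) * x * (e : Unitization ℂ A) := by
        ext
        · simp
        · simp [mul_add, mul_assoc, mul_smul_comm]
      rw [← Unitization.norm_inr (𝕜 := ℂ), h5]
      have h6 : ‖(e : Unitization ℂ A)‖ ≤ 1 := by rwa [Unitization.norm_inr]
      calc _ ≤ ‖(e : Unitization ℂ A)‖ * ‖x‖ * ‖(e : Unitization ℂ A)‖ := norm_mul₃_le
        _ ≤ 1 * ‖x‖ * 1 := by gcongr
        _ = ‖x‖ := by ring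
    calc _ ≤ ‖P (x.fst • (e * e) + e * (x.snd * e))‖ * ‖c‖ := norm_mul_le _ _
      _ ≤ ‖x‖ * ‖c‖ := by
        gcongr
        exact (P.le_of_opNorm_le hPn _).trans (by simpa using h4)
  simpa [extendP, Algebra.algebraMap_eq_smul_one] using hgoal

theorem exists_extension (hl : ApproxUnitIn D l)
    (h : ∀ a : A, Tendsto (fun e => e * a) l (𝓝 a)) {P : A →L[ℂ] A}
    (hP : IsCondExpectation D P) (hf : IsFaithful P) :
    ∃ Q : Unitization ℂ A →L[ℂ] Unitization ℂ A,
      IsCondExpectation (Dtilde D) Q ∧ IsFaithful Q := by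
  refine ⟨(extendP P).mkContinuous 1 fun x => by simpa using norm_extendP_le hl h hP x,
    ⟨fun x => ?_, fun x hx => ?_, ?_⟩, fun x hx => ?_⟩
  · simpa [extendP, mem_Dtilde] using hP.1 x.snd
  · ext
    · simp [extendP]
    · simpa [extendP] using hP.2.1 _ hx
  · exact LinearMap.mkContinuous_norm_le _ zero_le_one _
  · have h1 := congrArg (fun x => x.fst) hx
    have h2 := congrArg (fun x => x.snd) hx
    have h0 : x.fst = 0 := by simpa [extendP] using h1
    have h3 : P (star x.snd * x.snd) = 0 := by simpa [extendP, h0] using h2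
    ext
    · simpa using h0
    · simpa using hf _ h3

/-! ### Restricting the expectation to `A` -/

/-- A contractive functional on the unitization with value `1` at `1` that vanishes on `D`
vanishes on `A`. For `c ∈ A` the element `1 - e + c` has squared norm at most
`1 + ‖c‖² + o(1)` along the approximate unit, so `|1 + φ(c)|² ≤ 1 + ‖c‖²`; the left side grows
linearly in small multiples of `c` unless `φ(c) = 0`. -/
theorem functional_eq_zero (hl : ApproxUnitIn D l)
    (h : ∀ a : A, Tendsto (fun e => e * a) l (𝓝 a)) (φ : Unitization ℂ A →ₗ[ℂ] ℂ)
    (hφ : ∀ x, ‖φ x‖ ≤ ‖x‖) (h1 : φ 1 = 1) (hd : ∀ d ∈ D, φ (d : Unitization ℂ A) = 0) (b : A) :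
    φ (b : Unitization ℂ A) = 0 := by
  have := hl.neBot
  have key : ∀ c : A, ‖1 + φ (c : Unitization ℂ A)‖ ^ 2 ≤ 1 + ‖c‖ ^ 2 := by
    intro c
    have h0 : Tendsto (fun e => 1 + 2 * ‖c - e * c‖ + ‖c‖ ^ 2) l (𝓝 (1 + ‖c‖ ^ 2)) := by
      have := ((((tendsto_const_nhds (x := c)).sub (h c)).norm.const_mul 2).const_add 1).add_const
        (‖c‖ ^ 2)
      simpa using this
    refine ge_of_tendsto h0 ?_
    filter_upwards [hl.mem, hl.star_eq, hl.norm_one_sub_le] with e he hs hn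
    set f : Unitization ℂ A := 1 - (e : Unitization ℂ A) with hf
    set y : Unitization ℂ A := f + (c : Unitization ℂ A) with hy
    have hfs : star f = f := by simp [hf, ← Unitization.inr_star, hs]
    have hφy : φ y = 1 + φ (c : Unitization ℂ A) := by
      simp [hy, hf, h1, hd e he]
    have hfc : f * (c : Unitization ℂ A) = ((c - e * c : A) : Unitization ℂ A) := by
      simp [hf, sub_mul]
    have hyy : star y * y = f * f + f * (c : Unitization ℂ A)
        + star (f * (c : Unitization ℂ A)) + star (c : Unitization ℂ A) * c := by
      simp only [hy, star_add, star_mul, hfs]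
      noncomm_ring
    have hny : ‖y‖ ^ 2 ≤ 1 + 2 * ‖c - e * c‖ + ‖c‖ ^ 2 := by
      rw [sq, ← CStarRing.norm_star_mul_self, hyy]
      refine (norm_add₄_le).trans ?_
      rw [norm_star, hfc, Unitization.norm_inr, CStarRing.norm_star_mul_self,
        Unitization.norm_inr]
      have : ‖f * f‖ ≤ 1 := (norm_mul_le _ _).trans (mul_le_one₀ hn (norm_nonneg _) hn)
      nlinarith
    rw [← hφy]
    exact (pow_le_pow_left₀ (norm_nonneg _) (hφ y) 2).trans hny
  by_contra hne
  set w := φ (b : Unitization ℂ A) with hw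
  have hwpos : 0 < ‖w‖ ^ 2 := by positivity
  -- `key` is applied to `t w̄ b`, on which `φ` takes the positive value `t |w|²`.
  have hall : ∀ t : ℝ, 0 < t → 2 * ‖w‖ ^ 2 ≤ t * (‖w‖ ^ 2 * ‖b‖ ^ 2) := by
    intro t ht
    have := key (((t : ℂ) * star w) • b)
    rw [Unitization.inr_smul, map_smul, ← hw, smul_eq_mul, norm_smul, norm_mul, norm_star] at this
    have e1 : (1 : ℂ) + (t : ℂ) * star w * w = ((1 + t * ‖w‖ ^ 2 : ℝ) : ℂ) := by
      have : star w * w = ((‖w‖ ^ 2 : ℝ) : ℂ) := by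
        simpa using Complex.conj_mul' w
      rw [mul_assoc, this]; push_cast; ring
    rw [e1, Complex.norm_real, Complex.norm_real, Real.norm_of_nonneg (by positivity),
      Real.norm_of_nonneg ht.le] at this
    have h2 : t * (2 * ‖w‖ ^ 2) ≤ t * (t * (‖w‖ ^ 2 * ‖b‖ ^ 2)) := by
      nlinarith [sq_nonneg (t * ‖w‖ ^ 2)]
    exact le_of_mul_le_mul_left h2 ht
  have h3 := hall (1 / (‖b‖ ^ 2 + 1)) (by positivity)
  have h4 : 1 / (‖b‖ ^ 2 + 1) * (‖w‖ ^ 2 * ‖b‖ ^ 2) ≤ ‖w‖ ^ 2 := by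
    rw [one_div, inv_mul_le_iff₀ (by positivity)]
    nlinarith
  linarith

/-- The scalar part of `Q` vanishes on `A` by `functional_eq_zero`, so `Q` maps `A` into `D`. -/
theorem exists_restriction (hl : ApproxUnitIn D l)
    (h : ∀ a : A, Tendsto (fun e => e * a) l (𝓝 a))
    {Q : Unitization ℂ A →L[ℂ] Unitization ℂ A}
    (hQ : IsCondExpectation (Dtilde D) Q) (hf : IsFaithful Q) :
    ∃ P : A →L[ℂ] A, IsCondExpectation D P ∧ IsFaithful P := by
  obtain ⟨hQm, hQd, hQn⟩ := hQ
  have hQle : ∀ x, ‖Q x‖ ≤ ‖x‖ := fun x => by simpa using Q.le_of_opNorm_le hQn x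
  have hfst : ∀ a : A, (Q (a : Unitization ℂ A)).fst = 0 := by
    let φ : Unitization ℂ A →ₗ[ℂ] ℂ :=
      { toFun := fun x => (Q x).fst
        map_add' := fun x y => by simp
        map_smul' := fun c x => by simp }
    refine functional_eq_zero hl h φ (fun x => ?_) ?_ fun d hd => ?_
    · refine le_trans ?_ (hQle x)
      rw [Unitization.norm_eq_sup (Q x)]
      exact le_sup_left
    · simp [φ, hQd 1 (by simp [mem_Dtilde])]
    · simp [φ, hQd (d : Unitization ℂ A) (by simpa [mem_Dtilde] using hd)]
  have hinr : ∀ a : A, Q (a : Unitization ℂ A) = ((Q (a : Unitization ℂ A)).snd : A) := by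
    intro a
    ext
    · simpa using hfst a
    · simp
  let P₀ : A →ₗ[ℂ] A :=
    { toFun := fun a => (Q (a : Unitization ℂ A)).snd
      map_add' := fun x y => by simp
      map_smul' := fun c x => by simp }
  refine ⟨P₀.mkContinuous 1 fun a => ?_, ⟨fun a => hQm _, fun d hd => ?_, ?_⟩, fun a ha => ?_⟩
  · have := hQle (a : Unitization ℂ A)
    rw [hinr, Unitization.norm_inr, Unitization.norm_inr] at this
    simpa [P₀] using this
  · simp [P₀, hQd (d : Unitization ℂ A) (by simpa [mem_Dtilde] using hd)]
  · exact LinearMap.mkContinuous_norm_le _ zero_le_one _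
  · have h0 : Q ((star a * a : A) : Unitization ℂ A) = 0 := by
      rw [hinr]
      have : (Q ((star a * a : A) : Unitization ℂ A)).snd = 0 := ha
      rw [this, Unitization.inr_zero]
    have h1 := hf (a : Unitization ℂ A) (by simpa using h0)
    simpa using congrArg (fun x => x.snd) h1

end CartanPaper

/-- Let `(A, D)` be a regular inclusion of C*-algebras with `A` non-unital.
Then `(A, D)` is a Cartan inclusion if and only if its unitization `(Ã, D̃)` is a Cartan
inclusion. -/
theorem stmt_15 {A : Type*} [NonUnitalCStarAlgebra A]
    (D : NonUnitalStarSubalgebra ℂ A) (hDclosed : IsClosed (D : Set A))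
    (hDabelian : ∀ x ∈ D, ∀ y ∈ D, x * y = y * x)
    (hreg : IsRegularInclusion D)
    (hAnonunital : ¬∃ e : A, ∀ a : A, e * a = a ∧ a * e = a) :
    IsCartanInclusion D ↔ IsCartanInclusion (Dtilde D) := by
  have hcart : IsMasa D → ∃ l : Filter A, ApproxUnitIn D l ∧
      ∀ a : A, Tendsto (fun e => e * a) l (𝓝 a) := fun hM => by
    obtain ⟨l, hl⟩ := exists_approxUnitIn D hDclosed
    exact ⟨l, hl, hl.tendsto_all hDclosed hM hreg⟩
  constructor
  · rintro ⟨-, hM, P, hP, hf⟩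
    obtain ⟨l, hl, h⟩ := hcart hM
    exact ⟨hreg.unitization hDclosed hM, isMasa_Dtilde_iff.mpr hM, exists_extension hl h hP hf⟩
  · rintro ⟨-, hM', Q, hQ, hf⟩
    have hM := isMasa_Dtilde_iff.mp hM'
    obtain ⟨l, hl, h⟩ := hcart hM
    exact ⟨hreg, hM, exists_restriction hl h hQ hf⟩
end

section
/- Let H be a separable infinite-dimensional Hilbert space, let K denote the compact operators on H, and let D be a C*-subalgebra of B(H) whose double commutant D'' is a non-atomic maximal abelian von Neumann subalgebra of B(H). Set A = D + K. Then (A,D) is a singular MASA inclusion, and every approximate unit for D is an approximate unit for A. -/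
/-!
Write `D'` for the commutant of `D`. Since `D''' = D'`, the hypothesis says `D' = D''`, so `D'` is
a maximal abelian von Neumann algebra containing `D`, and it has no minimal projection.

* `D'` contains no nonzero compact operator (`eq_zero_of_isCompactOperator`): a nonzero spectral
  projection of `k* k` for a nonzero eigenvalue has finite rank and lies in `D'' = D'`, and a
  nonzero projection of least rank in `D'` would be minimal. Hence `(D + K) ∩ D' = D`.
* `D` acts nondegenerately (`eq_zero_of_forall_apply_eq_zero`): if `D h = 0`, the rank-one operator
  `h ⊗ h*` lies in `D'` and is compact, so it vanishes. Thus an approximate unit of `D` converges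
  strongly to `1`, and, being bounded, it converges uniformly on compact sets, so
  `u k → k` in norm for every compact `k`; passing to adjoints gives `k u → k`.
* If `n = d + k` satisfies `n D n* ⊆ D`, then for `e ∈ D` the operator `n e n* - d e d*` is compact
  and in `D`, hence zero, so that `n e n* = e d d*`. Expanding, `X = (n e - e n) f` satisfies
  `X X* = 0` for all `e, f ∈ D`. Nondegeneracy of `D` then gives `n e = e n`, so `n ∈ D'`, and
  `n ∈ D` by the first point.
-/


open Filter Topology

namespace CartanPaper

variable {B : Type*} [NonUnitalCStarAlgebra B]

/-- The commutant of a subset `S` of an algebra. -/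
def commutantSet (S : Set B) : Set B := {T : B | ∀ s ∈ S, T * s = s * T}

end CartanPaper

open CartanPaper

namespace CartanPaper

section

variable {H : Type*} [NormedAddCommGroup H] [InnerProductSpace ℂ H] [CompleteSpace H]

/-- An operator `T` is compact as soon as `T* T` is, because
`‖T x - T y‖² ≤ ‖T* T (x - y)‖ ‖x - y‖`. -/
lemma isCompactOperator_of_star_mul_self {T : H →L[ℂ] H}
    (hT : IsCompactOperator (star T * T : H →L[ℂ] H)) : IsCompactOperator T := by
  have key : ∀ z : H, ‖T z‖ ^ 2 ≤ ‖(star T * T) z‖ * ‖z‖ := by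
    intro z
    have h1 : (‖T z‖ ^ 2 : ℝ) = RCLike.re (inner ℂ ((star T * T) z) z) := by
      rw [ContinuousLinearMap.star_eq_adjoint]
      exact ContinuousLinearMap.apply_norm_sq_eq_inner_adjoint_left T z
    rw [h1]
    exact (RCLike.re_le_norm _).trans (norm_inner_le_norm _ _)
  have hT' : IsCompactOperator ((star T * T : H →L[ℂ] H) : H →ₗ[ℂ] H) := hT
  obtain ⟨K, hK, hKs⟩ := hT'.image_closedBall_subset_compact 1
  change IsCompactOperator (T : H →ₗ[ℂ] H)
  rw [isCompactOperator_iff_isCompact_closure_image_closedBall (T : H →ₗ[ℂ] H) one_pos]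
  refine (TotallyBounded.closure ?_).isCompact_of_isClosed isClosed_closure
  have htb : TotallyBounded ((star T * T : H →L[ℂ] H) '' Metric.closedBall 0 1) :=
    hK.totallyBounded.subset hKs
  rw [Metric.totallyBounded_iff]
  intro ε hε
  obtain ⟨t, hts, htf, hcov⟩ := Metric.finite_approx_of_totallyBounded htb (ε ^ 2 / 2)
    (by positivity)
  -- the net for `T* T` lifts to finitely many points of the ball, and their images under `T`
  -- form the required net
  have hts' : ∀ y ∈ t, ∃ x ∈ Metric.closedBall (0 : H) 1, (star T * T) x = y := fun y hy => hts hy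
  choose! g hgb hg using hts'
  refine ⟨(fun y => T (g y)) '' t, htf.image _, ?_⟩
  rintro _ ⟨x, hx, rfl⟩
  have hxc := hcov ⟨x, hx, rfl⟩
  simp only [Set.mem_iUnion, Metric.mem_ball, exists_prop] at hxc
  obtain ⟨y, hy, hxy⟩ := hxc
  simp only [Set.mem_iUnion, Metric.mem_ball, exists_prop]
  refine ⟨_, ⟨y, hy, rfl⟩, ?_⟩
  have h2 : ‖x - g y‖ ≤ 2 := by
    have h3 := hgb y hy
    simp only [Metric.mem_closedBall, dist_zero_right] at h3 hx
    exact (norm_sub_le _ _).trans (by linarith)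
  have h1 := key (x - g y)
  rw [dist_eq_norm, ← hg y hy, ← map_sub] at hxy
  change dist (T x) (T (g y)) < ε
  rw [dist_eq_norm, ← map_sub]
  have h4 : ‖T (x - g y)‖ ^ 2 < ε ^ 2 := by
    have := mul_le_mul_of_nonneg_left h2 (norm_nonneg ((star T * T) (x - g y)))
    linarith
  exact lt_of_pow_lt_pow_left₀ 2 hε.le h4

lemma _root_.IsCompactOperator.mul_left' {k : H →L[ℂ] H} (hk : IsCompactOperator k)
    (a : H →L[ℂ] H) : IsCompactOperator (a * k : H →L[ℂ] H) :=
  hk.clm_comp a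

lemma _root_.IsCompactOperator.mul_right' {k : H →L[ℂ] H} (hk : IsCompactOperator k)
    (a : H →L[ℂ] H) : IsCompactOperator (k * a : H →L[ℂ] H) :=
  hk.comp_clm a

/-- Schauder's theorem on a Hilbert space. -/
lemma isCompactOperator_star {k : H →L[ℂ] H} (hk : IsCompactOperator k) :
    IsCompactOperator (star k : H →L[ℂ] H) := by
  apply isCompactOperator_of_star_mul_self
  rw [star_star]
  exact hk.mul_right' (star k)

/-- A set of operators without minimal projections has no nonzero projection of finite rank:
one of least rank would be minimal. -/
lemma projection_eq_zero_of_finite_rank {M : Set (H →L[ℂ] H)}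
    (hna : ¬∃ p : H →L[ℂ] H, p ∈ M ∧ p ≠ 0 ∧ p * p = p ∧ star p = p ∧
        ∀ q ∈ M, q * q = q → star q = q → q * p = q → q = 0 ∨ q = p)
    (m : ℕ) : ∀ p ∈ M, p * p = p → star p = p → FiniteDimensional ℂ p.range →
      Module.finrank ℂ p.range = m → p = 0 := by
  induction m using Nat.strong_induction_on with
  | _ m ih =>
    intro p hpM hpp hps hfin hm
    by_contra hp0
    refine hna ⟨p, hpM, hp0, hpp, hps, fun q hqM hqq hqs hqp => ?_⟩
    have hpq : p * q = q := by
      have := congrArg star hqp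
      rwa [star_mul, hps, hqs] at this
    have hle : q.range ≤ p.range := by
      rintro _ ⟨x, rfl⟩
      exact ⟨q x, congrArg (fun T : H →L[ℂ] H => T x) hpq⟩
    have hqfin : FiniteDimensional ℂ q.range := Submodule.finiteDimensional_of_le hle
    rcases hle.lt_or_eq with hlt | heq
    · left
      exact ih _ (hm ▸ Submodule.finrank_lt_finrank_of_lt hlt) q hqM hqq hqs hqfin rfl
    · right
      -- `q` is the identity on its range, which is the range of `p`, so `q p = p`
      rw [← hqp]
      ext x
      have hx : p x ∈ q.range := heq ▸ ⟨x, rfl⟩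
      obtain ⟨y, hy⟩ := hx
      change q (p x) = p x
      change q y = p x at hy
      rw [← hy]
      exact congrArg (fun T : H →L[ℂ] H => T y) hqq

/-- A maximal abelian self-adjoint set of operators without minimal projections contains no
nonzero compact operator. -/
lemma eq_zero_of_isCompactOperator {M : Set (H →L[ℂ] H)} (hM : commutantSet M = M)
    (hstar : ∀ T ∈ M, star T ∈ M)
    (hna : ¬∃ p : H →L[ℂ] H, p ∈ M ∧ p ≠ 0 ∧ p * p = p ∧ star p = p ∧
        ∀ q ∈ M, q * q = q → star q = q → q * p = q → q = 0 ∨ q = p)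
    {k : H →L[ℂ] H} (hkM : k ∈ M) (hk : IsCompactOperator k) : k = 0 := by
  have comm : ∀ S ∈ M, ∀ T ∈ M, S * T = T * S := by
    intro S hS T hT
    rw [← hM] at hS
    exact hS T hT
  by_contra hk0
  set T : H →L[ℂ] H := star k * k with hTdef
  have hT0 : T ≠ 0 := fun h => hk0 (CStarRing.star_mul_self_eq_zero_iff k |>.1 h)
  have hTc : IsCompactOperator T := hk.mul_left' (star k)
  have hTsa : IsSelfAdjoint T := IsSelfAdjoint.star_mul_self k
  have hTs : T.IsSymmetric := hTsa.isSymmetric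
  have hex : ∃ μ, Module.End.HasEigenvalue (T : Module.End ℂ H) μ ∧ μ ≠ 0 := by
    by_contra! h
    exact hT0 ((ContinuousLinearMap.eq_zero_of_forall_hasEigenvalue_eq_zero hTc hTs).1 h)
  obtain ⟨μ, hμ, hμ0⟩ := hex
  set E := Module.End.eigenspace (T : Module.End ℂ H) μ with hE
  have hfin : FiniteDimensional ℂ E :=
    ContinuousLinearMap.finite_dimensional_eigenspace hTc μ hμ0
  have hinv : ∀ S ∈ M, ∀ x ∈ E, S x ∈ E := by
    intro S hS x hx
    have hST : S * T = T * S := by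
      rw [hTdef, ← mul_assoc, comm S hS _ (hstar k hkM), mul_assoc, comm S hS k hkM, mul_assoc]
    rw [hE, Module.End.mem_eigenspace_iff] at hx ⊢
    change T x = μ • x at hx
    change T (S x) = μ • S x
    have := congrArg (fun R : H →L[ℂ] H => R x) hST
    change S (T x) = T (S x) at this
    rw [← this, hx, map_smul]
  have hpM : E.starProjection ∈ M := by
    rw [← hM]
    intro S hS
    ext x
    change E.starProjection (S x) = S (E.starProjection x)
    refine Submodule.eq_starProjection_of_mem_orthogonal
      (hinv S hS _ (Submodule.starProjection_apply_mem E x)) ?_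
    rw [← map_sub, Submodule.mem_orthogonal]
    intro y hy
    rw [← ContinuousLinearMap.adjoint_inner_left]
    exact (Submodule.mem_orthogonal _ _).1 (Submodule.sub_starProjection_mem_orthogonal x) _
      (hinv _ (hstar S hS) y hy)
  have hrange : E.starProjection.range = E := Submodule.range_starProjection E
  have hp0 : E.starProjection = 0 :=
    projection_eq_zero_of_finite_rank hna _ _ hpM E.isIdempotentElem_starProjection
      (isSelfAdjoint_starProjection E) (by rw [hrange]; exact hfin) rfl
  obtain ⟨v, hv⟩ := hμ.exists_hasEigenvector
  have h1 : E.starProjection v = v := Submodule.starProjection_eq_self_iff.2 hv.1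
  rw [hp0] at h1
  exact hv.2 h1.symm

/-- `D` acts nondegenerately: if `D h = 0`, then the rank-one operator `h ⊗ h*` commutes with `D`
and is compact. -/
lemma eq_zero_of_forall_apply_eq_zero {D : NonUnitalStarSubalgebra ℂ (H →L[ℂ] H)}
    (hcpt : ∀ k ∈ commutantSet (D : Set (H →L[ℂ] H)), IsCompactOperator k → k = 0)
    {h : H} (hh : ∀ d ∈ D, d h = 0) : h = 0 := by
  have hmem : InnerProductSpace.rankOne ℂ h h ∈ commutantSet (D : Set (H →L[ℂ] H)) := by
    intro d hd
    ext x
    have h1 : star d h = 0 := hh _ (star_mem hd)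
    rw [ContinuousLinearMap.star_eq_adjoint] at h1
    simp [hh d hd, ← ContinuousLinearMap.adjoint_inner_left, h1]
  have hc : IsCompactOperator (InnerProductSpace.rankOne ℂ h h : H →L[ℂ] H) := by
    have h1 : IsCompactOperator (innerSL ℂ h : H →L[ℂ] ℂ) :=
      isCompactOperator_of_locallyCompactSpace_dom (innerSL ℂ h)
    exact h1.clm_comp (ContinuousLinearMap.toSpanSingleton ℂ h)
  have h0 := hcpt _ hmem hc
  have := congrArg (fun R : H →L[ℂ] H => R h) h0
  simpa using this

/-- A bounded approximate unit of a nondegenerate algebra converges strongly to the identity. -/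
lemma tendsto_apply_of_approximate_unit {D : NonUnitalStarSubalgebra ℂ (H →L[ℂ] H)}
    (hnd : ∀ h : H, (∀ d ∈ D, d h = 0) → h = 0) {ι : Type*} {l : Filter ι}
    {u : ι → (H →L[ℂ] H)} (hu : ∀ i, ‖u i‖ ≤ 1)
    (hlim : ∀ d ∈ D, Tendsto (fun i => u i * d) l (𝓝 d)) (x : H) :
    Tendsto (fun i => u i x) l (𝓝 x) := by
  let S : Submodule ℂ H := Submodule.span ℂ {y | ∃ d ∈ D, ∃ z, y = d z}
  have hS : ∀ y ∈ S, Tendsto (fun i => u i y) l (𝓝 y) := by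
    intro y hy
    induction hy using Submodule.span_induction with
    | mem y hy =>
      obtain ⟨d, hd, z, rfl⟩ := hy
      have : Continuous fun R : H →L[ℂ] H => R z := by fun_prop
      exact (this.tendsto d).comp (hlim d hd)
    | zero => simpa using tendsto_const_nhds
    | add a b _ _ ha hb => simpa using ha.add hb
    | smul c a _ ha => simpa using ha.const_smul c
  have hdense : S.topologicalClosure = ⊤ := by
    rw [Submodule.topologicalClosure_eq_top_iff, Submodule.eq_bot_iff]
    intro h hh
    refine hnd h fun d hd => ?_
    refine ext_inner_left ℂ fun v => ?_
    rw [← ContinuousLinearMap.adjoint_inner_left, inner_zero_right]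
    exact (Submodule.mem_orthogonal _ _).1 hh _ (Submodule.subset_span ⟨_, star_mem hd, v, rfl⟩)
  have hx : x ∈ closure (S : Set H) := by
    rw [← Submodule.topologicalClosure_coe, hdense]
    trivial
  rw [Metric.tendsto_nhds]
  intro ε hε
  obtain ⟨y, hy, hxy⟩ := Metric.mem_closure_iff.1 hx (ε / 3) (by positivity)
  filter_upwards [Metric.tendsto_nhds.1 (hS y hy) (ε / 3) (by positivity)] with i hi
  have h1 : dist (u i x) (u i y) ≤ dist x y := by
    rw [dist_eq_norm, dist_eq_norm, ← map_sub]
    simpa using (u i).le_of_opNorm_le (hu i) (x - y)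
  have h2 := dist_triangle4 (u i x) (u i y) y x
  rw [dist_comm y x] at h2
  linarith

/-- Strong convergence of contractions to `1` is uniform on compact sets, hence becomes norm
convergence after multiplication by a compact operator. -/
lemma tendsto_mul_of_isCompactOperator {ι : Type*} {l : Filter ι}
    {u : ι → (H →L[ℂ] H)} (hu : ∀ i, ‖u i‖ ≤ 1)
    (hlim : ∀ x, Tendsto (fun i => u i x) l (𝓝 x)) {k : H →L[ℂ] H} (hk : IsCompactOperator k) :
    Tendsto (fun i => u i * k) l (𝓝 k) := by
  have hk' : IsCompactOperator (k : H →ₗ[ℂ] H) := hk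
  obtain ⟨K, hK, hKs⟩ := hk'.image_closedBall_subset_compact 1
  rw [Metric.tendsto_nhds]
  intro ε hε
  obtain ⟨t, htf, hcov⟩ := Metric.totallyBounded_iff.1 hK.totallyBounded (ε / 4) (by positivity)
  have hev : ∀ᶠ i in l, ∀ y ∈ t, dist (u i y) y < ε / 4 :=
    (htf.eventually_all).2 fun y _ => Metric.tendsto_nhds.1 (hlim y) (ε / 4) (by positivity)
  filter_upwards [hev] with i hi
  rw [dist_eq_norm]
  refine lt_of_le_of_lt (ContinuousLinearMap.opNorm_le_of_unit_norm (C := 3 * ε / 4)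
    (by positivity) fun x hx => ?_) (by linarith)
  have hxc := hcov (hKs ⟨x, by simp [hx], rfl⟩)
  simp only [Set.mem_iUnion, Metric.mem_ball, exists_prop] at hxc
  obtain ⟨y, hy, hxy⟩ := hxc
  change dist (k x) y < ε / 4 at hxy
  have h1 : dist (u i (k x)) (u i y) ≤ dist (k x) y := by
    rw [dist_eq_norm, dist_eq_norm, ← map_sub]
    simpa using (u i).le_of_opNorm_le (hu i) (k x - y)
  have h2 := dist_triangle4 (u i (k x)) (u i y) y (k x)
  rw [dist_comm y (k x)] at h2
  change ‖u i (k x) - k x‖ ≤ _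
  rw [← dist_eq_norm]
  linarith [hi y hy]

/-- The algebraic heart of singularity: if `n e n* = e c` for all `e` in the commutative algebra
`D`, then `((n e - e n) f) ((n e - e n) f)* = 0` for `e, f ∈ D`. -/
lemma commutator_mul_eq_zero {D : NonUnitalStarSubalgebra ℂ (H →L[ℂ] H)}
    (hcomm : ∀ a ∈ D, ∀ b ∈ D, a * b = b * a) {n c : H →L[ℂ] H} (hc : c ∈ D)
    (hn : ∀ e ∈ D, n * e * star n = e * c) {e f : H →L[ℂ] H} (he : e ∈ D) (hf : f ∈ D) :
    (n * e - e * n) * f = 0 := by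
  rw [← CStarRing.mul_star_self_eq_zero_iff]
  have he' := star_mem he
  have hff : f * star f ∈ D := mul_mem hf (star_mem hf)
  have h1 := hn _ (mul_mem (mul_mem he hff) he')
  have h2 := hn _ (mul_mem he hff)
  have h3 := hn _ (mul_mem hff he')
  have h4 := hn _ hff
  have expand : (n * e - e * n) * f * star ((n * e - e * n) * f) =
      n * (e * (f * star f) * star e) * star n - n * (e * (f * star f)) * star n * star e
        - e * (n * (f * star f * star e) * star n) + e * (n * (f * star f) * star n) * star e := by
    simp only [star_mul, star_sub]
    noncomm_ring
  rw [expand, h1, h2, h3, h4]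
  have hce : c * star e = star e * c := hcomm _ hc _ he'
  simp only [mul_assoc, hce]
  abel

end

end CartanPaper

/-- Let `H` be a separable infinite-dimensional Hilbert space, let `K`
denote the compact operators on `H`, and let `D ⊆ B(H)` be a C*-subalgebra whose double
commutant `D''` is a non-atomic maximal abelian von Neumann subalgebra of `B(H)`.  Set
`A = D + K`.  Then `(A, D)` is a singular MASA inclusion and every approximate unit for `D`
is an approximate unit for `A`. -/
theorem stmt_16 {H : Type*} [NormedAddCommGroup H] [InnerProductSpace ℂ H] [CompleteSpace H]
    [TopologicalSpace.SeparableSpace H] (hinfdim : ¬FiniteDimensional ℂ H)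
    (D : NonUnitalStarSubalgebra ℂ (H →L[ℂ] H))
    (hDclosed : IsClosed (D : Set (H →L[ℂ] H)))
    -- `D''` is maximal abelian, i.e. it equals its own commutant:
    (hmasa'' : commutantSet (commutantSet (commutantSet (D : Set (H →L[ℂ] H)))) =
      commutantSet (commutantSet (D : Set (H →L[ℂ] H))))
    -- `D''` is non-atomic: it contains no minimal projections:
    (hnonatomic : ¬∃ p : H →L[ℂ] H,
      p ∈ commutantSet (commutantSet (D : Set (H →L[ℂ] H))) ∧ p ≠ 0 ∧
        p * p = p ∧ star p = p ∧
        ∀ q ∈ commutantSet (commutantSet (D : Set (H →L[ℂ] H))),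
          q * q = q → star q = q → q * p = q → q = 0 ∨ q = p) :
    -- with `A = D + K`:
    ∀ Aset : Set (H →L[ℂ] H),
      Aset = {x | ∃ d ∈ D, ∃ k : H →L[ℂ] H, IsCompactOperator k ∧ x = d + k} →
      -- `D` is a MASA in `A`:
      ({a : H →L[ℂ] H | a ∈ Aset ∧ ∀ d ∈ D, a * d = d * a} = (D : Set (H →L[ℂ] H))) ∧
      -- the inclusion `(A, D)` is singular, i.e. `N(A, D) = D`:
      ({n : H →L[ℂ] H | n ∈ Aset ∧
          ∀ d ∈ D, n * d * star n ∈ D ∧ star n * d * n ∈ D} = (D : Set (H →L[ℂ] H))) ∧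
      -- every approximate unit for `D` is an approximate unit for `A`:
      ∀ (ι : Type) (_ : Preorder ι), IsDirected ι (· ≤ ·) → Nonempty ι →
        ∀ u : ι → (H →L[ℂ] H),
          (∀ i, u i ∈ D) →
          (∀ i, ∃ v ∈ D, u i = star v * v) →
          (∀ i, ‖u i‖ ≤ 1) →
          (∀ d ∈ D, Tendsto (fun i => u i * d) atTop (𝓝 d) ∧
            Tendsto (fun i => d * u i) atTop (𝓝 d)) →
          ∀ a ∈ Aset, Tendsto (fun i => u i * a) atTop (𝓝 a) ∧
            Tendsto (fun i => a * u i) atTop (𝓝 a) := by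
  set C : Set (H →L[ℂ] H) := commutantSet (D : Set (H →L[ℂ] H)) with hC
  have hDC : (D : Set (H →L[ℂ] H)) ⊆ commutantSet C := fun d hd T hT => (hT d hd).symm
  -- the third commutant is the first
  have h3 : commutantSet (commutantSet C) = C := by
    apply Set.Subset.antisymm
    · exact fun T hT d hd => hT d (hDC hd)
    · exact fun T hT S hS => (hS T hT).symm
  have hCC : commutantSet C = C := by rw [← hmasa'', h3]
  rw [hCC] at hnonatomic hDC
  have hstar : ∀ T ∈ C, star T ∈ C := by
    intro T hT d hd
    have := congrArg star (hT (star d) (star_mem hd))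
    simpa using this.symm
  have hcpt : ∀ k ∈ C, IsCompactOperator k → k = 0 := fun k hk hkc =>
    eq_zero_of_isCompactOperator hCC hstar hnonatomic hk hkc
  have hnd : ∀ h : H, (∀ d ∈ D, d h = 0) → h = 0 := fun h hh =>
    eq_zero_of_forall_apply_eq_zero hcpt hh
  have hcomm : ∀ a ∈ D, ∀ b ∈ D, a * b = b * a := fun a ha b hb => hDC ha b hb
  have hsubC : ∀ a ∈ C, ∀ b ∈ C, a - b ∈ C := by
    intro a ha b hb d hd
    rw [sub_mul, mul_sub, ha d hd, hb d hd]
  rintro Aset rfl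
  have hDA : ∀ d ∈ D, ∃ d' ∈ D, ∃ k : H →L[ℂ] H, IsCompactOperator k ∧ d = d' + k :=
    fun d hd => ⟨d, hd, 0, isCompactOperator_zero, by simp⟩
  have hmasa : ∀ a : H →L[ℂ] H, (∃ d ∈ D, ∃ k : H →L[ℂ] H, IsCompactOperator k ∧ a = d + k) →
      a ∈ C → a ∈ D := by
    rintro _ ⟨d, hd, k, hk, rfl⟩ haC
    have hkC : k ∈ C := by simpa using hsubC _ haC _ (hDC hd)
    rw [hcpt k hkC hk, add_zero]
    exact hd
  refine ⟨?_, ?_, ?_⟩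
  · ext a
    exact ⟨fun ⟨haA, ha⟩ => hmasa a haA ha, fun ha => ⟨hDA a ha, fun d hd => hcomm a ha d hd⟩⟩
  · ext n
    refine ⟨?_, fun hnD => ⟨hDA n hnD, fun d hd =>
      ⟨mul_mem (mul_mem hnD hd) (star_mem hnD), mul_mem (mul_mem (star_mem hnD) hd) hnD⟩⟩⟩
    rintro ⟨hnA, hnorm⟩
    refine hmasa n hnA ?_
    obtain ⟨d, hd, k, hk, hndk⟩ := hnA
    have hks := isCompactOperator_star hk
    have hn : ∀ e ∈ D, n * e * star n = e * (d * star d) := by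
      intro e he
      have hded : d * e * star d ∈ D := mul_mem (mul_mem hd he) (star_mem hd)
      have heq : n * e * star n - d * e * star d =
          d * e * star k + k * (e * star d) + k * (e * star k) := by
        rw [hndk, star_add]
        noncomm_ring
      have hc : IsCompactOperator (n * e * star n - d * e * star d : H →L[ℂ] H) := by
        rw [heq]
        exact ((hks.mul_left' (d * e)).add (hk.mul_right' _)).add (hk.mul_right' _)
      have h0 := hcpt _ (hsubC _ (hDC (hnorm e he).1) _ (hDC hded)) hc
      rw [sub_eq_zero.1 h0, hcomm d hd e he, mul_assoc]
    intro e he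
    rw [← sub_eq_zero, ← star_eq_zero]
    -- `D` kills the range of the adjoint of the commutator
    ext x
    refine hnd _ fun f hf => ?_
    have h1 := congrArg star
      (commutator_mul_eq_zero hcomm (mul_mem hd (star_mem hd)) hn he (star_mem hf))
    rw [star_mul, star_star, star_zero] at h1
    exact congrArg (fun R : H →L[ℂ] H => R x) h1
  · rintro ι _ _ _ u huD hupos hu hlim _ ⟨d, hd, k, hk, rfl⟩
    have hsot := tendsto_apply_of_approximate_unit hnd hu fun d hd => (hlim d hd).1
    have husa : ∀ i, star (u i) = u i := by
      intro i
      obtain ⟨v, _, hv⟩ := hupos i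
      rw [hv, star_mul, star_star]
    constructor
    · simpa only [mul_add] using
        (hlim d hd).1.add (tendsto_mul_of_isCompactOperator hu hsot hk)
    · have h1 := (tendsto_mul_of_isCompactOperator hu hsot (isCompactOperator_star hk)).star
      simp only [star_mul, star_star, husa] at h1
      simpa only [add_mul] using (hlim d hd).2.add h1
end

section
/- Let H be a separable infinite-dimensional Hilbert space and let D be any maximal abelian *-subalgebra of B(H). Then the inclusion (B(H), D) is not regular; that is, the linear span of N(B(H), D) is not norm-dense in B(H). -/
open Filter Topology

/-!
The obstruction is that a normalizer is sparse relative to `D`, and sums of `m` sparse operators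
are too sparse to approximate arbitrarily large Fourier matrices.

If `n` is a normalizer and `q ∈ D` is a projection, then `star n * q * n ∈ D` commutes with `D`, so
`‖q (n (d ξ))‖ = ‖q (n ξ)‖` for every `d ∈ D` with `star d (d ξ) = ξ`
(`norm_projection_normalizer_apply`). By Bessel's inequality, for pairwise orthogonal projections
`q j ∈ D` and such elements `d j ∈ D`, the sum `∑ j, ‖q j (n (d j ξ))‖ ^ 2` is at most
`‖n ξ‖ ^ 2`, regardless of the number of terms. Any `S` in the span of the normalizers therefore
satisfies such a bound with a constant depending on `S` only (`exists_bound_of_mem_span`).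

A MASA on an infinite-dimensional space contains infinitely many pairwise orthogonal nonzero
projections (`exists_orthogonal_projections`): otherwise it would act by scalars on the
infinite-dimensional range of one of its projections, and every line in that range would give a
smaller projection in `D`. Group these projections into blocks of size `k + 1` for all `k`, pick
a unit vector `e (k, j)` in the range of each `p (k, j)`, and let `T` take the Fourier vector
`d (k, j) ξ_k` of each block to `e (k, j)`, where `ξ_k` is the normalized sum of the block and
`d (k, j) ∈ D` multiplies its terms by roots of unity. Each term `‖p (k, j) (T (d (k, j) ξ_k))‖`
is `1`, so for an `S` within `1 / 2` of `T` the sum over the `k`-th block is at least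
`(k + 1) / 4`, which is unbounded in `k`.
-/

/-! ### Orthogonal projections in a MASA -/

section Projections

variable {H : Type*} [NormedAddCommGroup H] [InnerProductSpace ℂ H] [CompleteSpace H]
  {D : NonUnitalStarSubalgebra ℂ (H →L[ℂ] H)}

/-- The orthogonal projection onto a `D`-invariant subspace lies in the MASA `D`, because it
commutes with `D`: invariance under `d` and under `star d` makes the subspace reducing. -/
lemma starProjection_mem_masa (hD : ∀ T : H →L[ℂ] H, T ∈ D ↔ ∀ d ∈ D, T * d = d * T)
    (K : Submodule ℂ H) [K.HasOrthogonalProjection] (hK : ∀ d ∈ D, ∀ x ∈ K, d x ∈ K) :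
    K.starProjection ∈ D := by
  have h1 : ∀ d ∈ D, K.starProjection * d * K.starProjection = d * K.starProjection := by
    intro d hd
    ext x
    exact Submodule.starProjection_eq_self_iff.2 (hK d hd _ (K.starProjection_apply_mem x))
  rw [hD]
  intro d hd
  have h2 := congrArg star (h1 (star d) (star_mem hd))
  have h3 : star K.starProjection = K.starProjection := (isSelfAdjoint_starProjection K)
  simp only [star_mul, star_star, h3] at h2
  rw [← h1 d hd, mul_assoc, h2]

/-- If the range of the projection `p` has no nontrivial closed `D`-invariant subspace, then every
self-adjoint `d ∈ D` acts on it as a scalar. For each real `t` one of the positive and negative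
parts of `d - t` vanishes on the range, so the quadratic form of `d` is constant on its unit
vectors. -/
lemma exists_scalar_of_irreducible (hD : ∀ T : H →L[ℂ] H, T ∈ D ↔ ∀ d ∈ D, T * d = d * T)
    {p : H →L[ℂ] H} (hpD : p ∈ D) (hp : IsStarProjection p)
    (hirr : ∀ K : Submodule ℂ H, IsClosed (K : Set H) → (∀ d ∈ D, ∀ x ∈ K, d x ∈ K) →
      (∀ x ∈ K, p x = x) → K = ⊥ ∨ ∀ x, p x = x → x ∈ K)
    {d : H →L[ℂ] H} (hd : d ∈ D) (hsa : IsSelfAdjoint d) :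
    ∃ c : ℂ, ∀ x, p x = x → d x = c • x := by
  have hcomm : ∀ a ∈ D, ∀ b ∈ D, a * b = b * a := fun a ha => (hD a).1 ha
  have one_mem : (1 : H →L[ℂ] H) ∈ D := (hD 1).2 fun d _ => by simp
  have hinv : ∀ a ∈ D, ∀ x, p x = x → p (a x) = a x := by
    intro a ha x hx
    have := congrArg (fun T : H →L[ℂ] H => T x) (hcomm p hpD a ha)
    simpa [hx] using this
  -- every real `t` is an upper or a lower bound of the quadratic form of `d` on the range of `p`
  have key : ∀ t : ℝ, (∀ x, p x = x → t * ‖x‖ ^ 2 ≤ (inner ℂ (d x) x).re) ∨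
      (∀ x, p x = x → (inner ℂ (d x) x).re ≤ t * ‖x‖ ^ 2) := by
    intro t
    set a : H →L[ℂ] H := d - (t : ℂ) • 1 with ha
    have haD : a ∈ D := sub_mem hd (D.smul_mem' _ one_mem)
    have hasa : IsSelfAdjoint a := by
      refine hsa.sub ?_
      rw [IsSelfAdjoint, star_smul, star_one]
      simp
    have hposD : a⁺ ∈ D := (hD _).2 fun b hb => (Commute.cfcₙ_real (hcomm a haD b hb) _)
    have hnegD : a⁻ ∈ D := (hD _).2 fun b hb => (Commute.cfcₙ_real (hcomm a haD b hb) _)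
    have hsub := CFC.posPart_sub_negPart a hasa
    have hin : ∀ x, (inner ℂ (a x) x).re = (inner ℂ (d x) x).re - t * ‖x‖ ^ 2 := by
      intro x
      rw [ha]
      simp [inner_self_eq_norm_sq_to_K, ← Complex.ofReal_pow]
    have hposn : ∀ x, 0 ≤ (inner ℂ (a⁺ x) x).re := fun x =>
      ((ContinuousLinearMap.nonneg_iff_isPositive _).1 (CFC.posPart_nonneg a)).re_inner_nonneg_left x
    have hnegn : ∀ x, 0 ≤ (inner ℂ (a⁻ x) x).re := fun x =>
      ((ContinuousLinearMap.nonneg_iff_isPositive _).1 (CFC.negPart_nonneg a)).re_inner_nonneg_left x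
    have hdec : ∀ x, a x = a⁺ x - a⁻ x := fun x => by
      conv_lhs => rw [← hsub]
      rfl
    by_cases hz : ∀ x, p x = x → a⁺ x = 0
    · right
      intro x hx
      have h1 := hin x
      have h2 := hnegn x
      rw [hdec, hz x hx, zero_sub, inner_neg_left, Complex.neg_re] at h1
      linarith
    · left
      push Not at hz
      obtain ⟨y, hy, hy0⟩ := hz
      have hK := hirr (LinearMap.ker (a⁻ : H →L[ℂ] H).toLinearMap ⊓
          LinearMap.ker (1 - p : H →L[ℂ] H).toLinearMap)
        ((a⁻ : H →L[ℂ] H).isClosed_ker.inter (1 - p : H →L[ℂ] H).isClosed_ker)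
        (by
          rintro b hb x ⟨hx1, hx2⟩
          have hx1' : a⁻ x = 0 := hx1
          have hx2' : x - p x = 0 := hx2
          refine ⟨?_, ?_⟩
          · change a⁻ (b x) = 0
            have := congrArg (fun T : H →L[ℂ] H => T x) (hcomm _ hnegD b hb)
            simpa [hx1'] using this
          · change b x - p (b x) = 0
            rw [hinv b hb x (sub_eq_zero.1 hx2').symm, sub_self])
        (by
          rintro x ⟨-, hx2⟩
          have hx2' : x - p x = 0 := hx2
          exact (sub_eq_zero.1 hx2').symm)
      rcases hK with hK | hK
      · exfalso
        apply hy0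
        rw [← Submodule.mem_bot ℂ, ← hK]
        refine ⟨?_, ?_⟩
        · exact congrArg (fun T : H →L[ℂ] H => T y) (CFC.negPart_mul_posPart a)
        · change a⁺ y - p (a⁺ y) = 0
          rw [hinv _ hposD y hy, sub_self]
      · intro x hx
        have h1 := hin x
        have h2 := hposn x
        have h3 : a⁻ x = 0 := (hK x hx).1
        rw [hdec, h3, sub_zero] at h1
        linarith
  by_cases hne : ∃ y, p y = y ∧ y ≠ 0
  · obtain ⟨y, hy, hy0⟩ := hne
    have hyn : 0 < ‖y‖ ^ 2 := by positivity
    set c : ℝ := (inner ℂ (d y) y).re / ‖y‖ ^ 2 with hc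
    have hcy : (inner ℂ (d y) y).re = c * ‖y‖ ^ 2 := by rw [hc]; field_simp
    have hform : ∀ x, p x = x → (inner ℂ (d x) x).re = c * ‖x‖ ^ 2 := by
      intro x hx
      by_cases hx0 : x = 0
      · simp [hx0]
      have hxn : 0 < ‖x‖ ^ 2 := by positivity
      set e : ℝ := (inner ℂ (d x) x).re / ‖x‖ ^ 2 with he
      have hex : (inner ℂ (d x) x).re = e * ‖x‖ ^ 2 := by rw [he]; field_simp
      rw [hex]
      have : e = c := by
        rcases key ((e + c) / 2) with h | h
        · have h1 := h x hx
          have h2 := h y hy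
          rw [hex] at h1
          rw [hcy] at h2
          have := le_of_mul_le_mul_right h1 hxn
          have := le_of_mul_le_mul_right h2 hyn
          linarith
        · have h1 := h x hx
          have h2 := h y hy
          rw [hex] at h1
          rw [hcy] at h2
          have := le_of_mul_le_mul_right h1 hxn
          have := le_of_mul_le_mul_right h2 hyn
          linarith
      rw [this]
    refine ⟨c, ?_⟩
    have hsymm : ∀ u v, inner ℂ (d u) v = inner ℂ u (d v) := fun u v => by
      have := ContinuousLinearMap.adjoint_inner_left d v u
      rw [← ContinuousLinearMap.star_eq_adjoint, hsa.star_eq] at this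
      exact this
    have hpsymm : ∀ u v, inner ℂ (p u) v = inner ℂ u (p v) := fun u v => by
      have := ContinuousLinearMap.adjoint_inner_left p v u
      rw [← ContinuousLinearMap.star_eq_adjoint, hp.isSelfAdjoint.star_eq] at this
      exact this
    have hpp : ∀ x, p (p x) = p x := fun x =>
      congrArg (fun T : H →L[ℂ] H => T x) hp.isIdempotentElem
    have hzero : p * (d - (c : ℂ) • 1) * p = 0 := by
      have : (↑(p * (d - (c : ℂ) • 1) * p : H →L[ℂ] H) : H →ₗ[ℂ] H) = 0 := by
        rw [← inner_map_self_eq_zero]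
        intro x
        change inner ℂ (p (d (p x) - (c : ℂ) • p x)) x = 0
        rw [hpsymm, inner_sub_left, inner_smul_left, inner_self_eq_norm_sq_to_K]
        have hre := hform (p x) (hpp x)
        have him : (inner ℂ (d (p x)) (p x)).im = 0 := by
          rw [← Complex.conj_eq_iff_im, inner_conj_symm, hsymm]
        apply Complex.ext
        · simp [hre, ← Complex.ofReal_pow]
        · simp [him, ← Complex.ofReal_pow]
      ext x
      exact congrArg (fun T : H →ₗ[ℂ] H => T x) this
    intro x hx
    have h1 : p (d (p x) - (c : ℂ) • p x) = 0 := congrArg (fun T : H →L[ℂ] H => T x) hzero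
    rw [hx, map_sub, map_smul, hx, hinv d hd x hx, sub_eq_zero] at h1
    exact h1
  · push Not at hne
    exact ⟨0, fun x hx => by simp [hne x hx]⟩

/-- A projection of infinite rank in a MASA strictly dominates another one of infinite rank. -/
lemma exists_smaller_projection (hD : ∀ T : H →L[ℂ] H, T ∈ D ↔ ∀ d ∈ D, T * d = d * T)
    {p : H →L[ℂ] H} (hpD : p ∈ D) (hp : IsStarProjection p)
    (hinf : ¬ FiniteDimensional ℂ p.range) :
    ∃ q ∈ D, IsStarProjection q ∧ ¬ FiniteDimensional ℂ q.range ∧ p * q = q ∧ q ≠ p := by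
  have hcomm : ∀ a ∈ D, ∀ b ∈ D, a * b = b * a := fun a ha => (hD a).1 ha
  have hpp : ∀ x, p (p x) = p x := fun x =>
    congrArg (fun T : H →L[ℂ] H => T x) hp.isIdempotentElem
  by_cases hirr : ∀ K : Submodule ℂ H, IsClosed (K : Set H) → (∀ d ∈ D, ∀ x ∈ K, d x ∈ K) →
      (∀ x ∈ K, p x = x) → K = ⊥ ∨ ∀ x, p x = x → x ∈ K
  · exfalso
    have hscal : ∀ d ∈ D, ∃ c : ℂ, ∀ x, p x = x → d x = c • x := by
      intro d hd
      obtain ⟨a, ha⟩ := exists_scalar_of_irreducible hD hpD hp hirr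
        (add_mem hd (star_mem hd)) (IsSelfAdjoint.add_star_self d)
      obtain ⟨b, hb⟩ := exists_scalar_of_irreducible hD hpD hp hirr
        (D.smul_mem' Complex.I (sub_mem hd (star_mem hd)))
        (by
          change star _ = _
          simp [star_smul, smul_sub, neg_add_eq_sub])
      refine ⟨(a - Complex.I * b) / 2, fun x hx => ?_⟩
      have h1 : d x + star d x = a • x := ha x hx
      have h2 : Complex.I • (d x - star d x) = b • x := hb x hx
      have h3 : d x - star d x = -(Complex.I * b) • x := by
        rw [neg_smul, mul_smul, ← h2, smul_smul, Complex.I_mul_I]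
        simp
      have h4 : (2 : ℂ) • d x = (a - Complex.I * b) • x := by
        rw [sub_eq_add_neg, add_smul, ← h1, ← h3, two_smul]
        abel
      rw [div_eq_inv_mul, mul_smul, ← h4, smul_smul]
      norm_num
    by_cases hz : ∃ x, p x = x ∧ x ≠ 0
    · obtain ⟨x, hx, hx0⟩ := hz
      have hcl : IsClosed ((Submodule.span ℂ {x} : Submodule ℂ H) : Set H) :=
        Submodule.closed_of_finiteDimensional _
      rcases hirr (Submodule.span ℂ {x}) hcl
        (by
          intro d hd y hy
          obtain ⟨c, hc⟩ := hscal d hd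
          obtain ⟨r, rfl⟩ := Submodule.mem_span_singleton.1 hy
          rw [hc _ (by rw [map_smul, hx])]
          exact Submodule.smul_mem _ _ hy)
        (by
          intro y hy
          obtain ⟨r, rfl⟩ := Submodule.mem_span_singleton.1 hy
          rw [map_smul, hx]) with h | h
      · exact hx0 (Submodule.span_singleton_eq_bot.1 h)
      · apply hinf
        refine Submodule.finiteDimensional_of_le (S₂ := Submodule.span ℂ {x}) ?_
        rintro _ ⟨y, rfl⟩
        exact h _ (hpp y)
    · push Not at hz
      apply hinf
      refine Submodule.finiteDimensional_of_le (S₂ := (⊥ : Submodule ℂ H)) ?_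
      rintro _ ⟨y, rfl⟩
      exact hz _ (hpp y)
  · push Not at hirr
    obtain ⟨K, hKc, hKinv, hKp, hK0, z, hz, hzK⟩ := hirr
    have : CompleteSpace K := hKc.completeSpace_coe
    set r := K.starProjection with hr
    have hrD : r ∈ D := starProjection_mem_masa hD K hKinv
    have hrp : IsStarProjection r := isStarProjection_starProjection
    have hpr : p * r = r := by
      ext x
      exact hKp _ (K.starProjection_apply_mem x)
    have hrp' : r * p = r := by rw [hcomm r hrD p hpD, hpr]
    by_cases hfin : FiniteDimensional ℂ r.range
    · refine ⟨p - r, sub_mem hpD hrD, ⟨?_, hp.isSelfAdjoint.sub hrp.isSelfAdjoint⟩, ?_, ?_, ?_⟩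
      · rw [IsIdempotentElem, sub_mul, mul_sub, mul_sub, hpr, hrp', hp.isIdempotentElem.eq,
          hrp.isIdempotentElem.eq]
        simp
      · intro hfin'
        apply hinf
        refine Submodule.finiteDimensional_of_le (S₂ := r.range ⊔ (p - r).range) ?_
        rintro _ ⟨y, rfl⟩
        refine Submodule.mem_sup.2 ⟨r y, ⟨y, rfl⟩, (p - r) y, ⟨y, rfl⟩, ?_⟩
        simp
      · rw [mul_sub, hpr, hp.isIdempotentElem.eq]
      · intro h
        have hr0 : r = 0 := by simpa using h
        apply hK0
        rw [eq_bot_iff]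
        intro x hx
        have : r x = x := Submodule.starProjection_eq_self_iff.2 hx
        rw [hr0] at this
        exact this.symm
    · refine ⟨r, hrD, hrp, hfin, hpr, fun h => hzK ?_⟩
      rw [← h] at hz
      exact Submodule.starProjection_eq_self_iff.1 hz

/-- A MASA on an infinite-dimensional space contains a sequence of nonzero, pairwise orthogonal
projections: the successive differences of a strictly decreasing sequence of projections. -/
lemma exists_orthogonal_projections
    (hD : ∀ T : H →L[ℂ] H, T ∈ D ↔ ∀ d ∈ D, T * d = d * T) (hinf : ¬ FiniteDimensional ℂ H) :
    ∃ (p : ℕ → H →L[ℂ] H) (e : ℕ → H), (∀ n, p n ∈ D) ∧ (∀ n, IsStarProjection (p n)) ∧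
      (∀ m n, m ≠ n → p m * p n = 0) ∧ (∀ n, p n (e n) = e n) ∧ ∀ n, ‖e n‖ = 1 := by
  have hcomm : ∀ a ∈ D, ∀ b ∈ D, a * b = b * a := fun a ha => (hD a).1 ha
  let S := {q : H →L[ℂ] H // q ∈ D ∧ IsStarProjection q ∧ ¬ FiniteDimensional ℂ q.range}
  have step : ∀ s : S, ∃ t : S, s.1 * t.1 = t.1 ∧ t.1 ≠ s.1 := by
    rintro ⟨p, h1, h2, h3⟩
    obtain ⟨q, k1, k2, k3, k4, k5⟩ := exists_smaller_projection hD h1 h2 h3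
    exact ⟨⟨q, k1, k2, k3⟩, k4, k5⟩
  choose f hf hf' using step
  let s0 : S := ⟨1, (hD 1).2 fun d _ => by simp, .one _, fun h => hinf (by
    have htop : (1 : H →L[ℂ] H).range = ⊤ := LinearMap.range_eq_top.2 fun x => ⟨x, rfl⟩
    rw [htop] at h
    exact Submodule.topEquiv.finiteDimensional)⟩
  let q : ℕ → S := fun n => f^[n] s0
  have hq : ∀ n, q (n + 1) = f (q n) := fun n => Function.iterate_succ_apply' f n s0
  have hqq : ∀ n, (q n).1 * (q n).1 = (q n).1 := fun n => (q n).2.2.1.isIdempotentElem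
  have hmul : ∀ m k, (q m).1 * (q (m + k)).1 = (q (m + k)).1 := by
    intro m k
    induction k with
    | zero => exact hqq m
    | succ k ih =>
      have h1 : (q (m + k)).1 * (q (m + (k + 1))).1 = (q (m + (k + 1))).1 := by
        rw [← add_assoc, hq]; exact hf _
      calc _ = (q m).1 * ((q (m + k)).1 * (q (m + (k + 1))).1) := by rw [h1]
        _ = _ := by rw [← mul_assoc, ih, h1]
  have hle : ∀ m n, m ≤ n → (q m).1 * (q n).1 = (q n).1 := fun m n h => by
    obtain ⟨k, rfl⟩ := Nat.exists_eq_add_of_le h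
    exact hmul m k
  have hle' : ∀ m n, m ≤ n → (q n).1 * (q m).1 = (q n).1 := fun m n h => by
    rw [hcomm _ (q n).2.1 _ (q m).2.1, hle m n h]
  have hp : ∀ n, IsStarProjection ((q n).1 - (q (n + 1)).1) := fun n => by
    refine ⟨?_, (q n).2.2.1.isSelfAdjoint.sub (q (n + 1)).2.2.1.isSelfAdjoint⟩
    rw [IsIdempotentElem, sub_mul, mul_sub, mul_sub, hqq, hqq, hle n (n + 1) (by simp),
      hle' n (n + 1) (by simp)]
    simp
  have hlt : ∀ m n, m < n → ((q m).1 - (q (m + 1)).1) * ((q n).1 - (q (n + 1)).1) = 0 := by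
    intro m n h
    rw [sub_mul, mul_sub, mul_sub, hle m n h.le, hle m (n + 1) (by lia), hle (m + 1) n h,
      hle (m + 1) (n + 1) (by lia)]
    simp
  have hmem : ∀ n, (q n).1 - (q (n + 1)).1 ∈ D := fun n => sub_mem (q n).2.1 (q (n + 1)).2.1
  have hex : ∀ n, ∃ e : H, ((q n).1 - (q (n + 1)).1) e = e ∧ ‖e‖ = 1 := by
    intro n
    have hne : (q n).1 - (q (n + 1)).1 ≠ 0 := by
      rw [hq]; exact sub_ne_zero.2 (hf' _).symm
    obtain ⟨x, hx⟩ : ∃ x, ((q n).1 - (q (n + 1)).1) x ≠ 0 := by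
      by_contra! h
      exact hne (ContinuousLinearMap.ext h)
    set y := ((q n).1 - (q (n + 1)).1) x
    have hy : ((q n).1 - (q (n + 1)).1) y = y :=
      congrArg (fun T : H →L[ℂ] H => T x) (hp n).isIdempotentElem
    refine ⟨((‖y‖⁻¹ : ℝ) : ℂ) • y, by rw [map_smul, hy], ?_⟩
    rw [norm_smul, Complex.norm_real, norm_inv, norm_norm]
    exact inv_mul_cancel₀ (norm_ne_zero_iff.2 hx)
  choose e he he' using hex
  refine ⟨fun n => (q n).1 - (q (n + 1)).1, e, hmem, hp, ?_, he, he'⟩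
  intro m n hmn
  rcases lt_or_gt_of_ne hmn with h | h
  · exact hlt m n h
  · rw [hcomm _ (hmem m) _ (hmem n)]
    exact hlt n m h

end Projections

/-! ### Normalizers and Fourier blocks -/

section Normalizers

variable {H : Type*} [NormedAddCommGroup H] [InnerProductSpace ℂ H] [CompleteSpace H]
  {D : NonUnitalStarSubalgebra ℂ (H →L[ℂ] H)}

lemma IsStarProjection.inner_apply_left {q : H →L[ℂ] H} (hq : IsStarProjection q) (u v : H) :
    inner ℂ (q u) v = inner ℂ u (q v) := by
  have := ContinuousLinearMap.adjoint_inner_left q v u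
  rwa [← ContinuousLinearMap.star_eq_adjoint, hq.isSelfAdjoint.star_eq] at this

lemma IsStarProjection.inner_apply_apply {q : H →L[ℂ] H} (hq : IsStarProjection q) (u v : H) :
    inner ℂ (q u) (q v) = inner ℂ (q u) v := by
  rw [← hq.inner_apply_left]
  exact congrArg (fun T : H →L[ℂ] H => inner ℂ (T u) v) hq.isIdempotentElem

/-- Bessel's inequality for pairwise orthogonal projections. -/
lemma sum_norm_sq_projections_le {ι : Type*} [Fintype ι] {q : ι → H →L[ℂ] H}
    (hq : ∀ i, IsStarProjection (q i)) (horth : ∀ i j, i ≠ j → q i * q j = 0) (y : H) :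
    ∑ i, ‖q i y‖ ^ 2 ≤ ‖y‖ ^ 2 := by
  set z := ∑ i, q i y with hz
  have hzq : ∀ i, q i z = q i y := by
    intro i
    rw [hz, map_sum, Finset.sum_eq_single i]
    · exact congrArg (fun T : H →L[ℂ] H => T y) (hq i).isIdempotentElem
    · intro j _ hj
      exact congrArg (fun T : H →L[ℂ] H => T y) (horth i j hj.symm)
    · simp
  have h1 : ∀ w, (∀ i, q i w = q i y) →
      RCLike.re (inner ℂ z w) = ∑ i, ‖q i y‖ ^ 2 := by
    intro w hw
    rw [hz, sum_inner, map_sum]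
    refine Finset.sum_congr rfl fun i _ => ?_
    rw [← (hq i).inner_apply_apply, hw i, inner_self_eq_norm_sq]
  have h2 := h1 y fun _ => rfl
  have h3 := h1 z hzq
  have h4 := norm_sub_sq (𝕜 := ℂ) z y
  rw [inner_self_eq_norm_sq] at h3
  nlinarith [sq_nonneg ‖z - y‖]

/-- For a normalizer `n`, the operator `star n * q * n` lies in `D` and so commutes with `d`. Hence
`n (d ξ)` has the same size on each `q` as `n ξ`: writing `D` as functions, multiplying `ξ` by
a function of modulus one does not change `|n ξ|`. -/
lemma norm_projection_normalizer_apply (hcomm : ∀ a ∈ D, ∀ b ∈ D, a * b = b * a)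
    {n q d : H →L[ℂ] H} (hn : star n * q * n ∈ D) (hq : IsStarProjection q) (hd : d ∈ D) {ξ : H}
    (hξ : star d (d ξ) = ξ) : ‖q (n (d ξ))‖ = ‖q (n ξ)‖ := by
  have h : ∀ x, ((‖q (n x)‖ ^ 2 : ℝ) : ℂ) = inner ℂ ((star n * q * n) x) x := by
    intro x
    have h1 := inner_self_eq_norm_sq_to_K (𝕜 := ℂ) (q (n x))
    rw [hq.inner_apply_apply] at h1
    have h2 : inner ℂ (star n (q (n x))) x = inner ℂ (q (n x)) (n x) :=
      ContinuousLinearMap.adjoint_inner_left n _ _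
    change _ = inner ℂ (star n (q (n x))) x
    rw [h2, h1]
    simp
  have h3 : inner ℂ ((star n * q * n) (d ξ)) (d ξ) = inner ℂ ((star n * q * n) ξ) ξ := by
    have h4 : (star n * q * n) (d ξ) = d ((star n * q * n) ξ) :=
      congrArg (fun T : H →L[ℂ] H => T ξ) (hcomm _ hn d hd)
    have h5 : inner ℂ ((star n * q * n) ξ) (star d (d ξ)) =
        inner ℂ (d ((star n * q * n) ξ)) (d ξ) := ContinuousLinearMap.adjoint_inner_right d _ _
    rw [h4, ← h5, hξ]
  rw [← h, ← h] at h3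
  have h6 : ‖q (n (d ξ))‖ ^ 2 = ‖q (n ξ)‖ ^ 2 := by exact_mod_cast h3
  exact (sq_eq_sq₀ (norm_nonneg _) (norm_nonneg _)).1 h6

/-- An operator taking one orthonormal family to another. -/
lemma exists_map_orthonormal {ι : Type*} {v w : ι → H} (hv : Orthonormal ℂ v)
    (hw : Orthonormal ℂ w) : ∃ T : H →L[ℂ] H, ∀ i, T (v i) = w i := by
  classical
  let V := hv.orthogonalFamily.linearIsometry
  let W := hw.orthogonalFamily.linearIsometry
  have hV : ∀ i, V (lp.single 2 i (1 : ℂ)) = v i := fun i => by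
    simp [V, OrthogonalFamily.linearIsometry_apply_single]
  have hW : ∀ i, W (lp.single 2 i (1 : ℂ)) = w i := fun i => by
    simp [W, OrthogonalFamily.linearIsometry_apply_single]
  refine ⟨W.toContinuousLinearMap ∘L ContinuousLinearMap.adjoint V.toContinuousLinearMap,
    fun i => ?_⟩
  have h1 : ContinuousLinearMap.adjoint V.toContinuousLinearMap (v i) = lp.single 2 i (1 : ℂ) := by
    refine ext_inner_right ℂ fun y => ?_
    rw [ContinuousLinearMap.adjoint_inner_left, ← hV i]
    exact V.inner_map_map _ _
  rw [ContinuousLinearMap.comp_apply, h1]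
  exact hW i

/-- The index set of the blocks: the `k`-th block has `k + 1` elements. -/
abbrev BlockIndex : Type := Σ k : ℕ, ZMod (k + 1)

/-- The discrete Fourier transform of the block of `(k, j)`, evaluated at the frequency `j`. -/
noncomputable def fourierVector (e : BlockIndex → H) (a : BlockIndex) : H :=
  ((Real.sqrt (a.1 + 1))⁻¹ : ℂ) •
    ∑ i : ZMod (a.1 + 1), ZMod.stdAddChar (i * a.2) • e ⟨a.1, i⟩

/-- The element `∑ i, ω ^ (i * j) • p (k, i)` of `D`, taking the Fourier vector of frequency `0` to
that of frequency `j`. -/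
noncomputable def fourierMultiplier (p : BlockIndex → H →L[ℂ] H) (a : BlockIndex) : H →L[ℂ] H :=
  ∑ i : ZMod (a.1 + 1), ZMod.stdAddChar (i * a.2) • p ⟨a.1, i⟩

lemma orthonormal_fourierVector {E : Type*} [NormedAddCommGroup E] [InnerProductSpace ℂ E]
    {e : BlockIndex → E} (he : Orthonormal ℂ e) :
    Orthonormal ℂ (fourierVector e) := by
  classical
  have hite := orthonormal_iff_ite.1 he
  rw [orthonormal_iff_ite]
  rintro ⟨k, j⟩ ⟨l, m⟩
  simp only [fourierVector, inner_smul_left, inner_smul_right]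
  by_cases hkl : k = l
  · subst hkl
    have h1 : ∀ x : ZMod (k + 1), (starRingEnd ℂ) (ZMod.stdAddChar (x * j)) *
        ZMod.stdAddChar (x * m) = ZMod.stdAddChar (x * (m - j)) := by
      intro x
      rw [← AddChar.map_neg_eq_conj, ← AddChar.map_add_eq_mul]
      congr 1
      ring
    have h2 := AddChar.sum_mulShift (m - j) (ZMod.isPrimitive_stdAddChar (k + 1))
    have h3 : ((Real.sqrt (k + 1) : ℝ) : ℂ) * (Real.sqrt (k + 1) : ℝ) = (k : ℂ) + 1 := by
      rw [← Complex.ofReal_mul, Real.mul_self_sqrt (by positivity)]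
      simp
    have h4 : (k : ℂ) + 1 ≠ 0 := by exact_mod_cast Nat.succ_ne_zero k
    have h5 := (he.comp (Sigma.mk k) sigma_mk_injective).inner_sum
      (fun x => ZMod.stdAddChar (x * j)) (fun x => ZMod.stdAddChar (x * m)) Finset.univ
    simp only [Function.comp_apply, h1, h2, ZMod.card] at h5
    rw [h5, map_inv₀, Complex.conj_ofReal, ← mul_assoc, ← mul_inv, h3]
    by_cases hjm : j = m
    · simp [hjm, h4]
    · simp [hjm, sub_eq_zero, Ne.symm hjm]
  · simp [hkl, sum_inner, inner_sum, inner_smul_left, inner_smul_right, hite]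

lemma sum_smul_projection_apply {E : Type*} [NormedAddCommGroup E] [InnerProductSpace ℂ E]
    {p : BlockIndex → E →L[ℂ] E} {e : BlockIndex → E}
    (horth : ∀ a b, a ≠ b → p a * p b = 0) (hpe : ∀ a, p a (e a) = e a) (k : ℕ)
    (c : ZMod (k + 1) → ℂ) (i : ZMod (k + 1)) :
    (∑ x, c x • p ⟨k, x⟩) (e ⟨k, i⟩) = c i • e ⟨k, i⟩ := by
  rw [sum_apply, Finset.sum_eq_single i]
  · simp [hpe]
  · intro x _ hx
    have hne : (⟨k, x⟩ : BlockIndex) ≠ ⟨k, i⟩ := by simpa using hx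
    have h1 : p ⟨k, x⟩ (p ⟨k, i⟩ (e ⟨k, i⟩)) = 0 :=
      congrArg (fun T : E →L[ℂ] E => T (e ⟨k, i⟩)) (horth _ _ hne)
    rw [hpe] at h1
    simp [h1]
  · simp

/-- For `S` in the span of the normalizers, the diagonal square sum of `S` from the Fourier vectors
of a block to the projections of that block is bounded uniformly in the size of the block. -/
lemma exists_bound_of_mem_span (hcomm : ∀ a ∈ D, ∀ b ∈ D, a * b = b * a)
    {p : BlockIndex → H →L[ℂ] H} {e : BlockIndex → H} (hpD : ∀ a, p a ∈ D)
    (hp : ∀ a, IsStarProjection (p a)) (horth : ∀ a b, a ≠ b → p a * p b = 0)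
    (hpe : ∀ a, p a (e a) = e a) (he : Orthonormal ℂ e) {S : H →L[ℂ] H}
    (hS : S ∈ Submodule.span ℂ
        {n : H →L[ℂ] H | ∀ d ∈ D, n * d * star n ∈ D ∧ star n * d * n ∈ D}) :
    ∃ C : ℝ, ∀ k : ℕ, ∑ j, ‖p ⟨k, j⟩ (S (fourierVector e ⟨k, j⟩))‖ ^ 2 ≤ C := by
  induction hS using Submodule.span_induction with
  | mem n hn =>
    refine ⟨‖n‖ ^ 2, fun k => ?_⟩
    set ξ := fourierVector e ⟨k, 0⟩ with hξ
    have hv : ∀ j, fourierMultiplier p ⟨k, j⟩ ξ = fourierVector e ⟨k, j⟩ := by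
      intro j
      simp only [hξ, fourierVector, fourierMultiplier, map_smul, map_sum,
        sum_smul_projection_apply horth hpe k (fun x => ZMod.stdAddChar (x * j))]
      simp
    have hξ' : ∀ j, star (fourierMultiplier p ⟨k, j⟩) (fourierMultiplier p ⟨k, j⟩ ξ) = ξ := by
      intro j
      have hstar : star (fourierMultiplier p ⟨k, j⟩) =
          ∑ x, ZMod.stdAddChar (-(x * j)) • p ⟨k, x⟩ := by
        simp only [fourierMultiplier, star_sum, star_smul, (hp _).isSelfAdjoint.star_eq,
          AddChar.map_neg_eq_conj]
        rfl
      rw [hv, hstar]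
      simp only [hξ, fourierVector, map_smul, map_sum,
        sum_smul_projection_apply horth hpe k (fun x => ZMod.stdAddChar (-(x * j))), smul_smul,
        ← AddChar.map_add_eq_mul]
      simp
    have hdD : ∀ j, fourierMultiplier p ⟨k, j⟩ ∈ D := fun j =>
      sum_mem fun x _ => D.smul_mem' _ (hpD _)
    have hξ1 : ‖ξ‖ = 1 := (orthonormal_fourierVector he).1 _
    calc ∑ j, ‖p ⟨k, j⟩ (n (fourierVector e ⟨k, j⟩))‖ ^ 2
        = ∑ j, ‖p ⟨k, j⟩ (n ξ)‖ ^ 2 := by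
          refine Finset.sum_congr rfl fun j _ => ?_
          rw [← hv j, norm_projection_normalizer_apply hcomm (hn _ (hpD _)).2 (hp _) (hdD j)
            (hξ' j)]
      _ ≤ ‖n ξ‖ ^ 2 := sum_norm_sq_projections_le (q := fun j => p ⟨k, j⟩) (fun j => hp _)
          (fun i j hij => horth _ _ (by simpa using hij)) _
      _ ≤ ‖n‖ ^ 2 := by
          gcongr
          simpa [hξ1] using n.le_opNorm ξ
  | zero => exact ⟨0, fun k => by simp⟩
  | add x y _ _ hx hy =>
    obtain ⟨A, hA⟩ := hx
    obtain ⟨B, hB⟩ := hy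
    refine ⟨2 * A + 2 * B, fun k => ?_⟩
    calc _ ≤ ∑ j, (2 * ‖p ⟨k, j⟩ (x (fourierVector e ⟨k, j⟩))‖ ^ 2 +
          2 * ‖p ⟨k, j⟩ (y (fourierVector e ⟨k, j⟩))‖ ^ 2) := by
          refine Finset.sum_le_sum fun j _ => ?_
          rw [add_apply, map_add]
          have h1 := norm_add_le (p ⟨k, j⟩ (x (fourierVector e ⟨k, j⟩)))
            (p ⟨k, j⟩ (y (fourierVector e ⟨k, j⟩)))
          have h2 := pow_le_pow_left₀ (norm_nonneg _) h1 2
          refine h2.trans ?_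
          nlinarith [sq_nonneg (‖p ⟨k, j⟩ (x (fourierVector e ⟨k, j⟩))‖ -
            ‖p ⟨k, j⟩ (y (fourierVector e ⟨k, j⟩))‖)]
      _ ≤ _ := by
          rw [Finset.sum_add_distrib, ← Finset.mul_sum, ← Finset.mul_sum]
          linarith [hA k, hB k]
  | smul c x _ hx =>
    obtain ⟨A, hA⟩ := hx
    refine ⟨‖c‖ ^ 2 * A, fun k => ?_⟩
    simp only [smul_apply, map_smul, norm_smul, mul_pow, ← Finset.mul_sum]
    exact mul_le_mul_of_nonneg_left (hA k) (by positivity)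

end Normalizers

/-- Let `H` be a separable infinite-dimensional Hilbert space and let `D`
be a maximal abelian *-subalgebra of `B(H)` (i.e. `D` equals its own relative commutant).
Then the inclusion `(B(H), D)` is not regular: the linear span of the normalizers
`N(B(H), D)` is not norm-dense in `B(H)`. -/
theorem stmt_19 {H : Type*} [NormedAddCommGroup H] [InnerProductSpace ℂ H] [CompleteSpace H]
    [TopologicalSpace.SeparableSpace H] (hinfdim : ¬FiniteDimensional ℂ H)
    (D : NonUnitalStarSubalgebra ℂ (H →L[ℂ] H))
    (hmasa : {T : H →L[ℂ] H | ∀ d ∈ D, T * d = d * T} = (D : Set (H →L[ℂ] H))) :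
    ¬Dense (↑(Submodule.span ℂ
        {n : H →L[ℂ] H | ∀ d ∈ D, n * d * star n ∈ D ∧ star n * d * n ∈ D}) :
      Set (H →L[ℂ] H)) := by
  intro hdense
  have hD : ∀ T : H →L[ℂ] H, T ∈ D ↔ ∀ d ∈ D, T * d = d * T := fun T =>
    (Set.ext_iff.1 hmasa T).symm
  obtain ⟨p', e', hpD', hp', horth', hpe', hnorm'⟩ := exists_orthogonal_projections hD hinfdim
  obtain ⟨g, hg⟩ := exists_injective_nat BlockIndex
  set p : BlockIndex → H →L[ℂ] H := fun a => p' (g a)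
  set e : BlockIndex → H := fun a => e' (g a)
  have horth : ∀ a b, a ≠ b → p a * p b = 0 := fun a b hab => horth' _ _ (hg.ne hab)
  have hpe : ∀ a, p a (e a) = e a := fun a => hpe' _
  have hp : ∀ a, IsStarProjection (p a) := fun a => hp' _
  have he : Orthonormal ℂ e := by
    refine ⟨fun a => hnorm' _, fun a b hab => ?_⟩
    have h1 : p a (p b (e b)) = 0 :=
      congrArg (fun T : H →L[ℂ] H => T (e b)) (horth a b hab)
    rw [hpe] at h1
    change inner ℂ (e a) (e b) = 0
    rw [← hpe a, (hp a).inner_apply_left, h1, inner_zero_right]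
  obtain ⟨T, hT⟩ := exists_map_orthonormal (orthonormal_fourierVector he) he
  obtain ⟨S, hS, hST⟩ := Metric.dense_iff.1 hdense T (1 / 2) (by norm_num)
  rw [Metric.mem_ball, dist_comm, dist_eq_norm] at hS
  obtain ⟨C, hC⟩ := exists_bound_of_mem_span (fun a ha => (hD a).1 ha) (fun a => hpD' _) hp horth
    hpe he hST
  have hlow : ∀ a, 1 / 4 ≤ ‖p a (S (fourierVector e a))‖ ^ 2 := by
    intro a
    have h1 : ‖p a ((T - S) (fourierVector e a))‖ ≤ 1 / 2 := by
      have h2 := sum_norm_sq_projections_le (ι := Unit) (q := fun _ => p a) (fun _ => hp a)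
        (fun i j hij => absurd (Subsingleton.elim i j) hij) ((T - S) (fourierVector e a))
      simp only [Finset.univ_unique, Finset.sum_const, Finset.card_singleton, one_smul] at h2
      have h3 := (T - S).le_opNorm (fourierVector e a)
      rw [(orthonormal_fourierVector he).1 a, mul_one] at h3
      exact ((pow_le_pow_iff_left₀ (norm_nonneg _) (norm_nonneg _) two_ne_zero).1 h2).trans
        (h3.trans hS.le)
    have h4 : p a ((T - S) (fourierVector e a)) = e a - p a (S (fourierVector e a)) := by
      rw [sub_apply, map_sub, hT, hpe]
    rw [h4] at h1
    have h5 := norm_sub_norm_le (e a) (p a (S (fourierVector e a)))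
    rw [he.1 a] at h5
    nlinarith
  obtain ⟨k, hk⟩ := exists_nat_gt (4 * C)
  have h1 : ∑ _j : ZMod (k + 1), (1 / 4 : ℝ) ≤ C :=
    (Finset.sum_le_sum fun j _ => hlow ⟨k, j⟩).trans (hC k)
  rw [Finset.sum_const, Finset.card_univ, ZMod.card, nsmul_eq_mul] at h1
  push_cast at h1
  linarith
end
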